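/- Let K = GF(q) be a finite field with q ≡ 3 (mod 4) and (V, f) a finite-dimensional nondegenerate symmetric bilinear space over K. Assume that either (1) dim V ≡ 0 (mod 4) and disc V = −1, or (2) dim V = 8 or dim V = 9. Then Ω(V) is bireflectional. -/

import Mathlib

open Polynomial Module

namespace Biref

variable {K V : Type*} [Field K] [AddCommGroup V] [Module K V]

/-- The orthogonal group of a bilinear form: all linear automorphisms preserving `f`. -/
def orthGroup (f : LinearMap.BilinForm K V) : Subgroup (V ≃ₗ[K] V) where
  carrier := {φ | ∀ x y : V, f (φ x) (φ y) = f x y}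
  one_mem' := fun _ _ => rfl
  mul_mem' := by
    intro a b ha hb x y
    simpa using (ha (b x) (b y)).trans (hb x y)
  inv_mem' := by
    intro a ha x y
    show f (a.symm x) (a.symm y) = f x y
    conv_rhs => rw [← a.apply_symm_apply x, ← a.apply_symm_apply y]
    exact (ha _ _).symm

/-- The special orthogonal group: isometries of determinant 1. -/
def specialOrthGroup (f : LinearMap.BilinForm K V) : Subgroup (V ≃ₗ[K] V) where
  carrier := {φ | (∀ x y : V, f (φ x) (φ y) = f x y) ∧
      LinearMap.det (φ : V →ₗ[K] V) = 1}
  one_mem' := ⟨fun _ _ => rfl, by simp⟩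
  mul_mem' := by
    rintro a b ⟨ha, ha'⟩ ⟨hb, hb'⟩
    refine ⟨fun x y => by simpa using (ha (b x) (b y)).trans (hb x y), ?_⟩
    rw [LinearEquiv.coe_toLinearMap_mul, map_mul, ha', hb', one_mul]
  inv_mem' := by
    rintro a ⟨ha, ha'⟩
    refine ⟨fun x y => ?_, ?_⟩
    · show f (a.symm x) (a.symm y) = f x y
      conv_rhs => rw [← a.apply_symm_apply x, ← a.apply_symm_apply y]
      exact (ha _ _).symm
    · have h1 : LinearMap.det ((a⁻¹ * a : V ≃ₗ[K] V) : V →ₗ[K] V) = 1 := by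
        rw [inv_mul_cancel, LinearEquiv.coe_toLinearMap_one, LinearMap.det_id]
      rw [LinearEquiv.coe_toLinearMap_mul, map_mul, ha', mul_one] at h1
      exact h1

/-- The commutator subgroup `Ω(V)` of the orthogonal group. -/
def omegaGroup (f : LinearMap.BilinForm K V) : Subgroup (V ≃ₗ[K] V) :=
  ⁅orthGroup f, orthGroup f⁆

/-- `g` is a product of two involutions lying in the subgroup `H`. -/
def IsBireflectionalIn {G : Type*} [Group G] (H : Subgroup G) (g : G) : Prop :=
  ∃ σ τ : G, σ ∈ H ∧ τ ∈ H ∧ σ ^ 2 = 1 ∧ τ ^ 2 = 1 ∧ g = σ * τ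

/-- `g` is bireflectional in the group `G`. -/
def IsBireflectional {G : Type*} [Group G] (g : G) : Prop :=
  ∃ σ τ : G, σ ^ 2 = 1 ∧ τ ^ 2 = 1 ∧ g = σ * τ

/-- `g` is reversed by some element of `H`. -/
def IsReversibleIn {G : Type*} [Group G] (H : Subgroup G) (g : G) : Prop :=
  ∃ α : G, α ∈ H ∧ α * g * α⁻¹ = g⁻¹

/-- A subspace is invariant under an endomorphism. -/
def Invt (ψ : V →ₗ[K] V) (U : Submodule K V) : Prop :=
  ∀ x ∈ U, ψ x ∈ U

/-- The discriminant of a (finite-dimensional, nondegenerate) bilinear space is the class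
of `d` in `K*/(K*)²`: some Gram determinant equals `d` times a nonzero square. -/
def HasDisc (f : LinearMap.BilinForm K V) (d : K) : Prop :=
  ∃ (b : Basis (Fin (Module.finrank K V)) K V) (c : Kˣ),
    (Matrix.of fun i j => f (b i) (b j)).det = d * (c : K) ^ 2

/-- A nondegenerate symmetric bilinear space is hyperbolic iff its Witt index is half its
dimension, i.e. there is a totally isotropic subspace of half the dimension. -/
def IsHyperbolicSpace (f : LinearMap.BilinForm K V) : Prop :=
  ∃ W : Submodule K V, (∀ x ∈ W, ∀ y ∈ W, f x y = 0) ∧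
    2 * Module.finrank K W = Module.finrank K V

/-- The multiplicity of `p ^ d` as an elementary divisor of `φ`. -/
noncomputable def edMult (φ : Module.End K V) (p : K[X]) (d : ℕ) : ℕ :=
  (2 * Module.finrank K (LinearMap.ker (Polynomial.aeval φ p ^ d))
    - Module.finrank K (LinearMap.ker (Polynomial.aeval φ p ^ (d + 1)))
    - Module.finrank K (LinearMap.ker (Polynomial.aeval φ p ^ (d - 1)))) / p.natDegree

/-- `n_j(φ)`: the number of elementary divisors `(x ± 1) ^ d` of `φ` with `d ≡ j mod 8`,
counted with multiplicity. -/
noncomputable def nPM [FiniteDimensional K V] (φ : Module.End K V) (j : ℕ) : ℕ :=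
  ∑ d ∈ Finset.range (Module.finrank K V + 1),
    if d % 8 = j % 8 then edMult φ (X - 1) d + edMult φ (X + 1) d else 0

/-- The Fitting one space `Bahn^∞(ψ) = ⋂ⱼ im (ψ - 1)^j`. -/
noncomputable def bahnInf (ψ : Module.End K V) : Submodule K V :=
  ⨅ j : ℕ, LinearMap.range ((ψ - 1) ^ j)

/-- The `K[x]`-submodule generated by `v` (`x` acting as `ψ`). -/
def cycSub (ψ : Module.End K V) (v : V) : Submodule K V :=
  Submodule.span K (Set.range fun n : ℕ => (ψ ^ n) v)

/-- `V` is a cyclic `K[x]`-module, `x` acting as `ψ`. -/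
def IsCyclicEnd (ψ : Module.End K V) : Prop :=
  ∃ v : V, cycSub ψ v = ⊤

/-- `V` is a direct sum of two cyclic `K[x]`-submodules, `x` acting as `ψ`. -/
def IsBicyclicEnd (ψ : Module.End K V) : Prop :=
  ∃ v w : V, cycSub ψ v ⊓ cycSub ψ w = ⊥ ∧ cycSub ψ v ⊔ cycSub ψ w = ⊤

/-- `V` is an indecomposable `K[x]`-module, `x` acting as `ψ`. -/
def ModIndec (ψ : Module.End K V) : Prop :=
  (⊥ : Submodule K V) ≠ ⊤ ∧
    ¬∃ A B : Submodule K V, Invt ψ A ∧ Invt ψ B ∧ A ≠ ⊥ ∧ B ≠ ⊥ ∧ A ⊓ B = ⊥ ∧ A ⊔ B = ⊤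

/-- `ψ` is orthogonally indecomposable w.r.t. `f`: `V ≠ 0` and the only nondegenerate
invariant subspaces are `0` and `V`. -/
def OrthIndec (f : LinearMap.BilinForm K V) (ψ : Module.End K V) : Prop :=
  (⊥ : Submodule K V) ≠ ⊤ ∧
    ∀ U : Submodule K V, Invt ψ U → (f.restrict U).Nondegenerate → U = ⊥ ∨ U = ⊤

/-- The Witt index: the dimension of a maximal totally isotropic subspace. -/
noncomputable def wittIndex (f : LinearMap.BilinForm K V) : ℕ :=
  sSup {n | ∃ W : Submodule K V, (∀ x ∈ W, ∀ y ∈ W, f x y = 0) ∧ Module.finrank K W = n}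


set_option linter.unusedSectionVars false
set_option linter.unusedVariables false



theorem span_basis (F : Submodule K V) {ι : Type*} (b : Basis ι K F) :
    Submodule.span K (Set.range fun i => (b i : V)) = F := by
  have := congrArg (Submodule.map F.subtype) b.span_eq
  rw [Submodule.map_span, ← Set.range_comp] at this
  rw [Submodule.map_top, Submodule.range_subtype] at this
  exact this

section dscSec
variable [Fintype K] [DecidableEq K] [FiniteDimensional K V]

/-- Nondegenerate subspace. -/
def ND (f : LinearMap.BilinForm K V) (F : Submodule K V) : Prop :=
  ∀ x ∈ F, (∀ y ∈ F, f x y = 0) → x = 0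

/-- Orthogonal subspaces. -/
def Perp (f : LinearMap.BilinForm K V) (F G : Submodule K V) : Prop :=
  ∀ x ∈ F, ∀ y ∈ G, f x y = 0

/-- Discriminant character. -/
noncomputable def dsc (f : LinearMap.BilinForm K V) (F : Submodule K V) : ℤ :=
  quadraticChar K (LinearMap.BilinForm.toMatrix (Module.finBasis K F) (f.restrict F)).det

theorem dsc_basis (f : LinearMap.BilinForm K V) (F : Submodule K V) {ι : Type*} [Fintype ι]
    [DecidableEq ι] (b : Basis ι K F) :
    quadraticChar K (LinearMap.BilinForm.toMatrix b (f.restrict F)).det = dsc f F := by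
  have e : ι ≃ Fin (finrank K F) := b.indexEquiv (Module.finBasis K F)
  set c := Module.finBasis K F with hc
  have h1 : (LinearMap.BilinForm.toMatrix b (f.restrict F)).det
      = (LinearMap.BilinForm.toMatrix (b.reindex e) (f.restrict F)).det := by
    rw [← Matrix.det_reindex_self e]
    congr 1
    ext i j
    simp [LinearMap.BilinForm.toMatrix_apply]
  rw [h1]
  have h2 := LinearMap.BilinForm.toMatrix_mul_basis_toMatrix c (b.reindex e) (f.restrict F)
  rw [← h2, Matrix.det_mul, Matrix.det_mul, Matrix.det_transpose, dsc, ← hc]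
  set u := (c.toMatrix (b.reindex e)).det with hu
  have hu0 : u ≠ 0 := by
    have := Basis.toMatrix_mul_toMatrix_flip c (b.reindex e)
    intro h0
    have h3 := congrArg Matrix.det this
    rw [Matrix.det_mul, ← hu, h0] at h3
    simp at h3
  rw [show u * (LinearMap.BilinForm.toMatrix c (f.restrict F)).det * u
    = u ^ 2 * (LinearMap.BilinForm.toMatrix c (f.restrict F)).det by ring, map_mul,
    quadraticChar_sq_one' hu0, one_mul]

theorem dsc_fam (f : LinearMap.BilinForm K V) (F : Submodule K V) {ι : Type*} [Fintype ι]
    [DecidableEq ι] (v : ι → V) (hv : LinearIndependent K v)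
    (hs : Submodule.span K (Set.range v) = F) :
    dsc f F = quadraticChar K (Matrix.of fun i j => f (v i) (v j)).det := by
  subst hs
  rw [← dsc_basis f _ (Basis.span hv)]
  congr 2
  ext i j
  simp [LinearMap.BilinForm.toMatrix_apply, Basis.span_apply]

theorem ND_iff_dsc {f : LinearMap.BilinForm K V} (hf : f.IsSymm) (F : Submodule K V) :
    ND f F ↔ dsc f F ≠ 0 := by
  rw [dsc, Ne, quadraticChar_eq_zero_iff, ← Ne,
    ← LinearMap.BilinForm.nondegenerate_iff_det_ne_zero]
  constructor
  · intro h
    apply LinearMap.BilinForm.Nondegenerate.ofSeparatingLeft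
    intro x hx
    exact Subtype.ext (h x x.2 fun y hy => hx ⟨y, hy⟩)
  · intro h x hx hxy
    exact congrArg Subtype.val (h.1 ⟨x, hx⟩ fun y => hxy y y.2)

theorem dsc_pm {f : LinearMap.BilinForm K V} (hf : f.IsSymm) {F : Submodule K V} (h : ND f F) :
    dsc f F = 1 ∨ dsc f F = -1 := by
  rw [ND_iff_dsc hf] at h
  apply quadraticChar_dichotomy
  intro h0
  apply h
  rw [dsc, h0, quadraticChar_zero]

theorem dsc_sup {f : LinearMap.BilinForm K V} (hf : f.IsSymm) {F G : Submodule K V}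
    (hp : Perp f F G) (hd : Disjoint F G) : dsc f (F ⊔ G) = dsc f F * dsc f G := by
  let bF := Module.finBasis K F
  let bG := Module.finBasis K G
  have sF : Submodule.span K (Set.range fun i => (bF i : V)) = F :=
    span_basis _ _
  have sG : Submodule.span K (Set.range fun i => (bG i : V)) = G :=
    span_basis _ _
  have lF : LinearIndependent K fun i => (bF i : V) :=
    bF.linearIndependent.map' F.subtype (by simp)
  have lG : LinearIndependent K fun i => (bG i : V) :=
    bG.linearIndependent.map' G.subtype (by simp)
  have l : LinearIndependent K (Sum.elim (fun i => (bF i : V)) fun i => (bG i : V)) :=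
    lF.sum_type lG (by rw [sF, sG]; exact hd)
  rw [dsc_fam f (F ⊔ G) _ l (by rw [Set.Sum.elim_range, Submodule.span_union, sF, sG]),
    dsc_fam f F _ lF sF, dsc_fam f G _ lG sG, ← map_mul, ← Matrix.det_fromBlocks_zero₁₂ _ 0]
  congr 2
  ext i j
  rcases i with i | i <;> rcases j with j | j <;> simp
  · exact hp _ (bF i).2 _ (bG j).2
  · rw [hf.eq]; exact hp _ (bF j).2 _ (bG i).2

theorem det_hyp {n : Type*} [Fintype n] [DecidableEq n] (B C D : Matrix n n K) :
    (Matrix.fromBlocks 0 B C D).det = (-1) ^ Fintype.card n * (B.det * C.det) := by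
  have hJ : Matrix.det (Matrix.fromBlocks (0 : Matrix n n K) (1 : Matrix n n K) (-1 : Matrix n n K)
      (0 : Matrix n n K)) = 1 := by
    have : (Matrix.fromBlocks (0 : Matrix n n K) (1 : Matrix n n K) (-1 : Matrix n n K) (0 : Matrix n n K))
        = Matrix.fromBlocks (1 : Matrix n n K) (1 : Matrix n n K) 0 (1 : Matrix n n K)
          * Matrix.fromBlocks (1 : Matrix n n K) 0 (-1) (1 : Matrix n n K)
          * Matrix.fromBlocks (1 : Matrix n n K) (1 : Matrix n n K) 0 (1 : Matrix n n K) := by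
      simp [Matrix.fromBlocks_multiply]
    rw [this]
    simp
  have h2 : Matrix.fromBlocks 0 B C D * Matrix.fromBlocks (0 : Matrix n n K) (1 : Matrix n n K) (-1 : Matrix n n K) (0 : Matrix n n K)
      = Matrix.fromBlocks (-B) 0 (-D) C := by
    simp [Matrix.fromBlocks_multiply]
  have h3 := congrArg Matrix.det h2
  rw [Matrix.det_mul, hJ, mul_one, Matrix.det_fromBlocks_zero₁₂, Matrix.det_neg] at h3
  rw [h3]; ring

theorem dsc_hyp {f : LinearMap.BilinForm K V} (hf : f.IsSymm)
    (hm1 : quadraticChar K (-1) = -1) {F I : Submodule K V}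
    (hF : ND f F) (hI : I ≤ F) (hiso : Perp f I I) (hdim : 2 * finrank K I = finrank K F) :
    dsc f F = (-1) ^ finrank K I := by
  obtain ⟨C', hC'⟩ := Submodule.exists_isCompl (Submodule.comap F.subtype I)
  set C := C'.map F.subtype with hC
  have hII : (Submodule.comap F.subtype I).map F.subtype = I := by
    rw [Submodule.map_comap_subtype]; exact inf_eq_right.mpr hI
  have hdis : Disjoint I C := by
    rw [← hII, hC]
    exact (Submodule.disjoint_map F.subtype_injective hC'.disjoint)
  have hsup : I ⊔ C = F := by
    rw [← hII, hC, ← Submodule.map_sup, hC'.sup_eq_top]; simp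
  have hdC : finrank K C = finrank K I := by
    have := Submodule.finrank_sup_add_finrank_inf_eq I C
    rw [hsup, hdis.eq_bot, finrank_bot] at this
    omega
  let bF := Module.finBasis K I
  let bG := (Module.finBasis K C).reindex (finCongr hdC)
  have sF : Submodule.span K (Set.range fun i => (bF i : V)) = I :=
    span_basis _ _
  have sG : Submodule.span K (Set.range fun i => (bG i : V)) = C :=
    span_basis _ _
  have lF : LinearIndependent K fun i => (bF i : V) :=
    bF.linearIndependent.map' I.subtype (by simp)
  have lG : LinearIndependent K fun i => (bG i : V) :=
    bG.linearIndependent.map' C.subtype (by simp)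
  have l : LinearIndependent K (Sum.elim (fun i => (bF i : V)) fun i => (bG i : V)) :=
    lF.sum_type lG (by rw [sF, sG]; exact hdis)
  have key := dsc_fam f F _ l (by rw [Set.Sum.elim_range, Submodule.span_union, sF, sG, hsup])
  have hne := (ND_iff_dsc hf F).1 hF
  set B : Matrix (Fin (finrank K I)) (Fin (finrank K I)) K :=
    Matrix.of fun i j => f (bF i) (bG j) with hB
  have hM : (Matrix.of fun i j => f (Sum.elim (fun i => (bF i : V)) (fun i => (bG i : V)) i)
      (Sum.elim (fun i => (bF i : V)) (fun i => (bG i : V)) j))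
      = Matrix.fromBlocks 0 B B.transpose (Matrix.of fun i j => f (bG i) (bG j)) := by
    ext i j
    rcases i with i | i <;> rcases j with j | j <;> simp [hB]
    · exact hiso _ (bF i).2 _ (bF j).2
    · exact hf.eq _ _
  rw [hM, det_hyp, Matrix.det_transpose, ← sq, map_mul, map_pow, hm1] at key
  rw [key] at hne ⊢
  have hb : B.det ≠ 0 := by
    intro h0; apply hne; simp [h0]
  rw [quadraticChar_sq_one' hb]; simp

theorem ND_compl {f : LinearMap.BilinForm K V} (hf : f.IsSymm) {W U : Submodule K V}
    (hW : ND f W) (hU : ND f U) (hUW : U ≤ W) :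
    ∃ U' : Submodule K V, (∀ x, x ∈ U' ↔ x ∈ W ∧ ∀ y ∈ U, f y x = 0) ∧ U ⊔ U' = W ∧ Perp f U U' ∧
      Disjoint U U' ∧ ND f U' := by
  let P := f.orthogonal U
  have hP : ∀ x, x ∈ P ↔ ∀ y ∈ U, f y x = 0 := fun x => Iff.rfl
  have hdis : Disjoint U P := by
    rw [Submodule.disjoint_def]
    intro x hx hx'
    refine hU x hx fun y hy => ?_
    rw [hf.eq]; exact hx' y hy
  have hcompl : IsCompl U P := by
    apply (LinearMap.BilinForm.isCompl_orthogonal_iff_disjoint ?_).2 hdis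
    exact hf.isRefl
  have hs : U ⊔ (W ⊓ P) = W := by
    have h1 : U ⊔ P ⊓ W = (U ⊔ P) ⊓ W := (sup_inf_assoc_of_le P hUW).symm
    rw [inf_comm, h1, hcompl.sup_eq_top, top_inf_eq]
  have hperp : Perp f U (W ⊓ P) := fun x hx y hy => hy.2 x hx
  refine ⟨W ⊓ P, fun x => Iff.rfl, hs, hperp, hdis.mono_right inf_le_right, ?_⟩
  intro x hx hxy
  refine hW x hx.1 fun y hy => ?_
  rw [← hs] at hy
  obtain ⟨u, hu, p, hp, rfl⟩ := Submodule.mem_sup.1 hy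
  rw [map_add, hxy p hp, hf.eq, hperp u hu x hx, add_zero]

theorem ND_sup {f : LinearMap.BilinForm K V} (hf : f.IsSymm) {F G : Submodule K V}
    (hF : ND f F) (hG : ND f G) (hp : Perp f F G) : ND f (F ⊔ G) ∧ Disjoint F G := by
  constructor
  · intro x hx hxy
    obtain ⟨a, ha, b, hb, rfl⟩ := Submodule.mem_sup.1 hx
    have h1 : a = 0 := hF a ha fun y hy => by
      have := hxy y (Submodule.mem_sup_left hy)
      rwa [map_add, LinearMap.add_apply, hf.eq b, hp y hy b hb, add_zero] at this
    have h2 : b = 0 := hG b hb fun y hy => by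
      have := hxy y (Submodule.mem_sup_right hy)
      rwa [map_add, LinearMap.add_apply, hp a ha y hy, zero_add] at this
    rw [h1, h2, add_zero]
  · rw [Submodule.disjoint_def]
    exact fun x hx hx' => hF x hx fun y hy => by rw [hf.eq]; exact hp y hy x hx'

theorem dsc_bot (f : LinearMap.BilinForm K V) : dsc f ⊥ = 1 := by
  rw [dsc_fam f ⊥ (Fin.elim0 : Fin 0 → V) linearIndependent_empty_type (by simp)]
  simp

end dscSec

/-- evaluation at a vector -/
noncomputable def ev (T : Module.End K V) (x : V) : K[X] →ₗ[K] V :=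
  (LinearMap.applyₗ x) ∘ₗ (aeval T).toLinearMap

theorem ev_apply (T : Module.End K V) (x : V) (p : K[X]) : ev T x p = aeval T p x := rfl

/-- the cyclic subspace -/
noncomputable def Z (T : Module.End K V) (x : V) : Submodule K V := LinearMap.range (ev T x)

theorem mem_Z {T : Module.End K V} {x y : V} : y ∈ Z T x ↔ ∃ p : K[X], aeval T p x = y := Iff.rfl

theorem aeval_mem_Z (T : Module.End K V) (x : V) (p : K[X]) : aeval T p x ∈ Z T x := ⟨p, rfl⟩

theorem self_mem_Z (T : Module.End K V) (x : V) : x ∈ Z T x := ⟨1, by simp [ev_apply]⟩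

theorem amul (T : Module.End K V) (p q : K[X]) (x : V) :
    aeval T (p * q) x = aeval T p (aeval T q x) := by
  rw [map_mul, Module.End.mul_apply]

theorem amem {T : Module.End K V} {W : Submodule K V} (hW : ∀ x ∈ W, T x ∈ W) (p : K[X]) {x : V}
    (hx : x ∈ W) : aeval T p x ∈ W := by
  induction p using Polynomial.induction_on' with
  | add p q hp hq => rw [map_add, LinearMap.add_apply]; exact W.add_mem hp hq
  | monomial n a =>
    rw [aeval_monomial]
    rw [Module.End.mul_apply, Module.algebraMap_end_apply]
    refine W.smul_mem _ ?_
    induction n with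
    | zero => simpa using hx
    | succ n ih => rw [pow_succ', Module.End.mul_apply]; exact hW _ ih

theorem Z_le {T : Module.End K V} {W : Submodule K V} (hW : ∀ x ∈ W, T x ∈ W) {x : V}
    (hx : x ∈ W) : Z T x ≤ W := by
  rintro _ ⟨p, rfl⟩
  exact amem hW p hx

theorem Z_inv (T : Module.End K V) (x : V) : ∀ y ∈ Z T x, T y ∈ Z T x := by
  rintro _ ⟨p, rfl⟩
  refine ⟨X * p, ?_⟩
  rw [ev_apply, amul, aeval_X, ev_apply]

theorem Z_aeval_le (T : Module.End K V) (x : V) (p : K[X]) : Z T (aeval T p x) ≤ Z T x :=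
  Z_le (Z_inv T x) (aeval_mem_Z T x p)

theorem aadj {f : LinearMap.BilinForm K V} {T : Module.End K V}
    (hT : ∀ x y, f (T x) y = f x (T y)) (p : K[X]) (x y : V) :
    f (aeval T p x) y = f x (aeval T p y) := by
  induction p using Polynomial.induction_on' with
  | add p q hp hq => simp only [map_add, LinearMap.add_apply, hp, hq]
  | monomial n a =>
    simp only [aeval_monomial, Module.End.mul_apply, Module.algebraMap_end_apply, map_smul,
      LinearMap.smul_apply]
    congr 1
    induction n generalizing x with
    | zero => simp
    | succ n ih =>
      rw [pow_succ, Module.End.mul_apply, ih, hT, ← Module.End.mul_apply, ← pow_succ', ← pow_succ]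

theorem fam_map (T : Module.End K V) (x : V) (n : ℕ) :
    Submodule.span K (Set.range fun i : Fin n => aeval T (X ^ (i : ℕ) : K[X]) x)
      = (degreeLT K n).map (ev T x) := by
  classical
  rw [degreeLT_eq_span_X_pow, Submodule.map_span]
  congr 1
  ext y
  simp only [Set.mem_range, Set.mem_image, Finset.coe_image, Finset.coe_range, Set.mem_Iio]
  constructor
  · rintro ⟨i, rfl⟩
    exact ⟨_, ⟨i, i.2, rfl⟩, rfl⟩
  · rintro ⟨_, ⟨i, hi, rfl⟩, rfl⟩
    exact ⟨⟨i, hi⟩, rfl⟩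

theorem fam_li (T : Module.End K V) (x : V) (n : ℕ)
    (h : ∀ p : K[X], p.degree < n → aeval T p x = 0 → p = 0) :
    LinearIndependent K fun i : Fin n => aeval T (X ^ (i : ℕ) : K[X]) x := by
  rw [Fintype.linearIndependent_iff]
  intro g hg i
  set p : K[X] := ∑ i : Fin n, C (g i) * X ^ (i : ℕ) with hp
  have hp0 : p = 0 := by
    apply h
    · exact (degree_sum_fin_lt g)
    · rw [hp, map_sum, LinearMap.sum_apply, ← hg]
      refine Finset.sum_congr rfl fun i _ => ?_
      rw [amul, aeval_C, Module.algebraMap_end_apply]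
  have := congrArg (fun q => coeff q i) hp0
  simp only [hp, finsetSum_coeff, coeff_C_mul, coeff_X_pow, coeff_zero] at this
  simpa [Fin.val_inj] using this

theorem Z_eq_map (T : Module.End K V) (x : V) {g : K[X]} (hg : g.Monic) (h0 : aeval T g x = 0) :
    Z T x = (degreeLT K g.natDegree).map (ev T x) := by
  apply le_antisymm
  · rintro _ ⟨p, rfl⟩
    refine ⟨p %ₘ g, ?_, ?_⟩
    · rw [SetLike.mem_coe, mem_degreeLT, ← degree_eq_natDegree hg.ne_zero]
      exact degree_modByMonic_lt p hg
    · conv_rhs => rw [← modByMonic_add_div p g]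
      rw [map_add, ev_apply T x (g * _), mul_comm, amul, h0, map_zero, add_zero]
  · rintro _ ⟨p, _, rfl⟩
    exact ⟨p, rfl⟩

theorem bez {r : K[X]} (hr : Irreducible r) {e : ℕ} {p : K[X]} (h : ¬ r ^ e ∣ p) :
    ∃ a b : K[X], r ^ (e - 1) = a * p + b * r ^ e := by
  classical
  have hd : EuclideanDomain.gcd p (r ^ e) ∣ r ^ e := EuclideanDomain.gcd_dvd_right _ _
  obtain ⟨i, hi, hass⟩ := (dvd_prime_pow hr.prime e).1 hd
  have hie : i < e := by
    rcases hi.lt_or_eq with h1 | h1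
    · exact h1
    · exfalso; subst h1
      exact h (hass.symm.dvd.trans (EuclideanDomain.gcd_dvd_left _ _))
  have h1 : EuclideanDomain.gcd p (r ^ e) ∣ r ^ (e - 1) :=
    hass.dvd.trans (pow_dvd_pow _ (by omega))
  obtain ⟨c, hc⟩ := h1
  rw [EuclideanDomain.gcd_eq_gcd_ab p (r ^ e)] at hc
  exact ⟨c * EuclideanDomain.gcdA p (r ^ e), c * EuclideanDomain.gcdB p (r ^ e), by rw [hc]; ring⟩

theorem ann_dvd {T : Module.End K V} {x : V} {r : K[X]} (hr : Irreducible r) {e : ℕ}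
    (h0 : aeval T (r ^ e) x = 0) (h1 : e ≠ 0 → aeval T (r ^ (e - 1)) x ≠ 0) {p : K[X]}
    (hp : aeval T p x = 0) : r ^ e ∣ p := by
  by_contra h
  have he : e ≠ 0 := by rintro rfl; simp at h
  obtain ⟨a, b, hab⟩ := bez hr h
  apply h1 he
  rw [hab, map_add, LinearMap.add_apply, amul, amul, hp, h0]; simp

theorem ann_li {T : Module.End K V} {x : V} {r : K[X]} (hr : Irreducible r) (hm : r.Monic) {e : ℕ}
    (h0 : aeval T (r ^ e) x = 0) (h1 : e ≠ 0 → aeval T (r ^ (e - 1)) x ≠ 0) {n : ℕ}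
    (hn : n ≤ e * r.natDegree) :
    LinearIndependent K fun i : Fin n => aeval T (X ^ (i : ℕ) : K[X]) x := by
  apply fam_li
  intro p hp hp0
  have := ann_dvd hr h0 h1 hp0
  by_contra hne
  have h2 := degree_le_of_dvd this hne
  have h3 := lt_of_le_of_lt h2 hp
  rw [degree_eq_natDegree (hm.pow e).ne_zero, hm.natDegree_pow] at h3
  have h4 : e * r.natDegree < n := by exact_mod_cast h3
  omega

theorem cyc_span {T : Module.End K V} {x : V} {r : K[X]} (hm : r.Monic) {e : ℕ}
    (h0 : aeval T (r ^ e) x = 0) :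
    Submodule.span K (Set.range fun i : Fin (e * r.natDegree) => aeval T (X ^ (i : ℕ) : K[X]) x)
      = Z T x := by
  rw [fam_map, Z_eq_map T x (hm.pow e) h0, hm.natDegree_pow]

theorem cyc_finrank {T : Module.End K V} {x : V} {r : K[X]} (hr : Irreducible r) (hm : r.Monic)
    {e : ℕ} (h0 : aeval T (r ^ e) x = 0) (h1 : e ≠ 0 → aeval T (r ^ (e - 1)) x ≠ 0) :
    finrank K (Z T x) = e * r.natDegree := by
  rw [← cyc_span hm h0, finrank_span_eq_card (ann_li hr hm h0 h1 le_rfl), Fintype.card_fin]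

theorem cyc_ND {f : LinearMap.BilinForm K V} {T : Module.End K V}
    (hT : ∀ x y, f (T x) y = f x (T y)) {x : V} {r : K[X]} (hr : Irreducible r) {e : ℕ}
    (h0 : aeval T (r ^ e) x = 0) {t : K[X]} (hg : f (aeval T (t * r ^ (e - 1)) x) x ≠ 0) :
    ND f (Z T x) := by
  rintro _ ⟨p, rfl⟩ hy
  rw [ev_apply] at *
  by_cases h : r ^ e ∣ p
  · obtain ⟨c, rfl⟩ := h
    rw [mul_comm, amul, h0, map_zero]
  · exfalso
    obtain ⟨a, b, hab⟩ := bez hr h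
    apply hg
    rw [hab, amul, map_add, LinearMap.add_apply, amul, amul, h0, map_zero, add_zero, ← amul,
      aadj hT]
    exact hy _ (aeval_mem_Z T x _)

section fin
variable [Fintype K] [DecidableEq K] [FiniteDimensional K V]

theorem cyc_dsc_even {f : LinearMap.BilinForm K V} (hf : f.IsSymm)
    (hm1 : quadraticChar K (-1) = -1) {T : Module.End K V}
    (hT : ∀ x y, f (T x) y = f x (T y)) {x : V} {r : K[X]} (hr : Irreducible r) (hm : r.Monic)
    {h : ℕ} (h0 : aeval T (r ^ (2 * h)) x = 0)
    {t : K[X]} (hg : f (aeval T (t * r ^ (2 * h - 1)) x) x ≠ 0) :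
    dsc f (Z T x) = (-1) ^ (h * r.natDegree) := by
  have hne : ∀ {p : K[X]}, f (aeval T (t * p) x) x ≠ 0 → aeval T p x ≠ 0 := by
    intro p hp h0; rw [amul, h0] at hp; simp at hp
  have hF := cyc_finrank hr hm h0 (fun _ => hne hg)
  have hI : finrank K (Z T (aeval T (r ^ h) x)) = h * r.natDegree := by
    apply cyc_finrank hr hm
    · rw [← amul, ← pow_add, ← two_mul, h0]
    · intro hh
      rw [← amul, ← pow_add, show h - 1 + h = 2 * h - 1 by omega]
      exact hne hg
  rw [← hI]
  refine dsc_hyp hf hm1 (cyc_ND hT hr h0 hg) (Z_aeval_le T x _) ?_ ?_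
  · rintro _ ⟨p, rfl⟩ _ ⟨q, rfl⟩
    rw [ev_apply, ev_apply, ← amul, ← amul, aadj hT, ← amul,
      show p * r ^ h * (q * r ^ h) = (p * q) * r ^ (2 * h) by ring, amul, h0]
    simp
  · rw [hF, hI]; ring

theorem cyc_dsc_odd {f : LinearMap.BilinForm K V} (hf : f.IsSymm)
    (hm1 : quadraticChar K (-1) = -1) {T : Module.End K V}
    (hT : ∀ x y, f (T x) y = f x (T y)) {x : V} {r : K[X]} (hr : Irreducible r) (hm : r.Monic)
    {h : ℕ} (h0 : aeval T (r ^ (2 * h + 1)) x = 0)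
    {t : K[X]} (hg : f (aeval T (t * r ^ (2 * h)) x) x ≠ 0) :
    dsc f (Z T x) = (-1) ^ (h * r.natDegree) * quadraticChar K
      (Matrix.of fun i j : Fin r.natDegree =>
        f (aeval T (X ^ (i : ℕ) * X ^ (j : ℕ) * r ^ (2 * h) : K[X]) x) x).det := by
  have hne : ∀ {p : K[X]}, f (aeval T (t * p) x) x ≠ 0 → aeval T p x ≠ 0 := by
    intro p hp h0; rw [amul, h0] at hp; simp at hp
  have hND := cyc_ND hT hr h0 hg
  have hF := cyc_finrank hr hm h0 (fun _ => hne hg)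
  have hI : finrank K (Z T (aeval T (r ^ (h + 1)) x)) = h * r.natDegree := by
    apply cyc_finrank hr hm
    · rw [← amul, ← pow_add, ← add_assoc, ← two_mul, h0]
    · intro hh
      rw [← amul, ← pow_add, show h - 1 + (h + 1) = 2 * h by omega]
      exact hne hg
  set y := aeval T (r ^ h) x with hy
  have hli : LinearIndependent K fun i : Fin r.natDegree => aeval T (X ^ (i : ℕ) : K[X]) y := by
    apply ann_li (e := h + 1) hr hm
    · rw [hy, ← amul, ← pow_add, show h + 1 + h = 2 * h + 1 by omega, h0]
    · intro hh
      rw [hy, ← amul, ← pow_add, show h + 1 - 1 + h = 2 * h by omega]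
      exact hne hg
    · nlinarith
  have hsp := fam_map T y r.natDegree
  set P := (degreeLT K r.natDegree).map (ev T y) with hP
  have hPZ : P ≤ Z T x := by
    rintro _ ⟨p, _, rfl⟩
    exact Z_aeval_le T x _ (aeval_mem_Z T y p)
  have hPND : ND f P := by
    rintro _ ⟨p, hp, rfl⟩ hpy
    rw [SetLike.mem_coe, mem_degreeLT] at hp
    rw [ev_apply] at *
    by_contra hpne
    have hp0 : p ≠ 0 := by rintro rfl; simp at hpne
    have hnd : ¬ r ^ 1 ∣ p := by
      intro hd
      rw [pow_one] at hd
      have := degree_le_of_dvd hd hp0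
      rw [degree_eq_natDegree hm.ne_zero] at this
      exact absurd (lt_of_le_of_lt this hp) (lt_irrefl _)
    obtain ⟨a, b, hab⟩ := bez hr hnd
    rw [Nat.sub_self, pow_zero, pow_one] at hab
    apply hg
    have h2 : aeval T (t * r ^ (2 * h)) x = aeval T (p * (t * a * r ^ (2 * h))) x := by
      have : t * r ^ (2 * h) = p * (t * a * r ^ (2 * h)) + t * b * r ^ (2 * h + 1) := by
        calc t * r ^ (2 * h) = t * (a * p + b * r) * r ^ (2 * h) := by rw [← hab, mul_one]
          _ = _ := by ring
      conv_lhs => rw [this]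
      rw [map_add, LinearMap.add_apply, amul T (t * b), h0, map_zero, add_zero]
    rw [h2]
    generalize t * a = a at *
    have h3 : p * (a * r ^ (2 * h)) = (a %ₘ r) * r ^ h * (p * r ^ h)
        + p * (a /ₘ r) * r ^ (2 * h + 1) := by
      conv_lhs => rw [← modByMonic_add_div a r]
      ring
    rw [h3, map_add, LinearMap.add_apply, amul T _ (r ^ (2 * h + 1)), h0, map_zero, add_zero,
      amul, amul T p, ← hy, aadj hT, amul, ← hy]
    apply hpy
    refine ⟨_, ?_, rfl⟩
    rw [SetLike.mem_coe, mem_degreeLT, ← degree_eq_natDegree hm.ne_zero]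
    exact degree_modByMonic_lt a hm
  obtain ⟨P', hP'mem, hsup, hperp, hdis, hND'⟩ := ND_compl hf hND hPND hPZ
  rw [← hsup, dsc_sup hf hperp hdis, mul_comm]
  congr 1
  · rw [← hI]
    refine dsc_hyp hf hm1 hND' (I := Z T (aeval T (r ^ (h + 1)) x)) ?_ ?_ ?_
    · intro z hz
      rw [hP'mem]
      refine ⟨Z_aeval_le T x _ hz, ?_⟩
      obtain ⟨q, rfl⟩ := hz
      rintro _ ⟨p, _, rfl⟩
      rw [ev_apply, ev_apply, hy, ← amul, ← amul, aadj hT, ← amul,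
        show p * r ^ h * (q * r ^ (h + 1)) = (p * q) * r ^ (2 * h + 1) by ring, amul, h0]
      simp
    · rintro _ ⟨p, rfl⟩ _ ⟨q, rfl⟩
      rw [ev_apply, ev_apply, ← amul, ← amul, aadj hT, ← amul,
        show p * r ^ (h + 1) * (q * r ^ (h + 1)) = (p * q * r) * r ^ (2 * h + 1) by ring, amul, h0]
      simp
    · have h4 := Submodule.finrank_sup_add_finrank_inf_eq P P'
      rw [hsup, hdis.eq_bot, finrank_bot, hF] at h4
      have h5 : finrank K P = r.natDegree := by
        rw [← hsp, finrank_span_eq_card hli, Fintype.card_fin]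
      rw [hI]
      rw [h5] at h4
      have : (2 * h + 1) * r.natDegree = 2 * (h * r.natDegree) + r.natDegree := by ring
      omega
  · rw [dsc_fam f P _ hli hsp]
    congr 2
    ext i j
    simp only [Matrix.of_apply]
    rw [hy, ← amul, ← amul, ← aadj hT, ← amul]
    congr 3
    ring_nf

end fin

/-- the system of a self-adjoint and a skew map -/
structure Sys (f : LinearMap.BilinForm K V) (T D : Module.End K V) : Prop where
  symm : f.IsSymm
  two : (2 : K) ≠ 0
  hT : ∀ x y, f (T x) y = f x (T y)
  hD : ∀ x y, f (D x) y = - f x (D y)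
  comm : ∀ x, T (D x) = D (T x)
  sq : ∀ x, D (D x) = T (T x) - (4 : K) • x

/-- a configuration: an orthogonal splitting swapped by the skew map -/
structure Conf (f : LinearMap.BilinForm K V) (T D : Module.End K V) (W F N : Submodule K V) :
    Prop where
  sup : F ⊔ N = W
  perp : Perp f F N
  ndF : ND f F
  ndN : ND f N
  TF : ∀ x ∈ F, T x ∈ F
  TN : ∀ x ∈ N, T x ∈ N
  DF : ∀ x ∈ F, D x ∈ N
  DN : ∀ x ∈ N, D x ∈ F

theorem Conf.swap {f : LinearMap.BilinForm K V} (hf : f.IsSymm) {T D : Module.End K V}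
    {W F N : Submodule K V} (h : Conf f T D W F N) : Conf f T D W N F :=
  ⟨by rw [sup_comm]; exact h.sup, fun x hx y hy => by rw [hf.eq]; exact h.perp y hy x hx, h.ndN,
    h.ndF, h.TN, h.TF, h.DN, h.DF⟩

/-- a sign -/
def pm (a : ℤ) : Prop := a = 1 ∨ a = -1

theorem pm_mul {a b : ℤ} (ha : pm a) (hb : pm b) : pm (a * b) := by
  rcases ha with rfl | rfl <;> rcases hb with rfl | rfl <;> simp [pm]

theorem pm_pow (n : ℕ) : pm ((-1) ^ n) := neg_one_pow_eq_or ℤ n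

theorem pm_sq {a : ℤ} (ha : pm a) : a * a = 1 := by
  rcases ha with rfl | rfl <;> simp

theorem pm_ne {a b : ℤ} (ha : pm a) (hb : pm b) (h : a ≠ b) : a = - b := by
  rcases ha with rfl | rfl <;> rcases hb with rfl | rfl <;> simp_all

section fin
variable [Fintype K] [DecidableEq K] [FiniteDimensional K V]
variable {f : LinearMap.BilinForm K V} {T D : Module.End K V}

/-- achievable pair -/
def Ach (f : LinearMap.BilinForm K V) (T D : Module.End K V) (W : Submodule K V) (ε b : ℤ) :
    Prop :=
  ∃ F N, Conf f T D W F N ∧ (-1 : ℤ) ^ finrank K N = ε ∧ dsc f N = b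

theorem finrank_sup_disj {F G : Submodule K V} (h : Disjoint F G) :
    finrank K (F ⊔ G : Submodule K V) = finrank K F + finrank K G := by
  have := Submodule.finrank_sup_add_finrank_inf_eq F G
  rw [h.eq_bot, finrank_bot] at this
  exact this

theorem Conf.nd (hf : f.IsSymm) {W F N : Submodule K V} (h : Conf f T D W F N) :
    ND f W := by
  rw [← h.sup]; exact (ND_sup hf h.ndF h.ndN h.perp).1

theorem Ach.nd (hf : f.IsSymm) {W : Submodule K V} {ε b : ℤ} (h : Ach f T D W ε b) : ND f W := by
  obtain ⟨F, N, h, -, -⟩ := h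
  exact h.nd hf

theorem Perp.sup_left {F G H : Submodule K V} (h1 : Perp f F H) (h2 : Perp f G H) :
    Perp f (F ⊔ G) H := by
  intro x hx y hy
  obtain ⟨a, ha, b, hb, rfl⟩ := Submodule.mem_sup.1 hx
  rw [map_add, LinearMap.add_apply, h1 a ha y hy, h2 b hb y hy, add_zero]

theorem Perp.sup_right {F G H : Submodule K V} (h1 : Perp f F G) (h2 : Perp f F H) :
    Perp f F (G ⊔ H) := by
  intro x hx y hy
  obtain ⟨a, ha, b, hb, rfl⟩ := Submodule.mem_sup.1 hy
  rw [map_add, h1 x hx a ha, h2 x hx b hb, add_zero]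

theorem Perp.mono {F G F' G' : Submodule K V} (h : Perp f F G) (h1 : F' ≤ F) (h2 : G' ≤ G) :
    Perp f F' G' := fun x hx y hy => h x (h1 hx) y (h2 hy)

theorem Perp.symm (hf : f.IsSymm) {F G : Submodule K V} (h : Perp f F G) : Perp f G F :=
  fun x hx y hy => by rw [hf.eq]; exact h y hy x hx

theorem map_sup_mem {L : Module.End K V} {F G F' G' : Submodule K V} (h1 : ∀ x ∈ F, L x ∈ F')
    (h2 : ∀ x ∈ G, L x ∈ G') : ∀ x ∈ F ⊔ G, L x ∈ F' ⊔ G' := by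
  intro x hx
  obtain ⟨a, ha, b, hb, rfl⟩ := Submodule.mem_sup.1 hx
  rw [map_add]
  exact Submodule.add_mem_sup (h1 a ha) (h2 b hb)

theorem Conf.add (hf : f.IsSymm) {W1 W2 F1 F2 N1 N2 : Submodule K V} (hp : Perp f W1 W2)
    (h1 : Conf f T D W1 F1 N1) (h2 : Conf f T D W2 F2 N2) :
    Conf f T D (W1 ⊔ W2) (F1 ⊔ F2) (N1 ⊔ N2) := by
  have a1 : F1 ≤ W1 := h1.sup ▸ le_sup_left
  have a2 : N1 ≤ W1 := h1.sup ▸ le_sup_right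
  have a3 : F2 ≤ W2 := h2.sup ▸ le_sup_left
  have a4 : N2 ≤ W2 := h2.sup ▸ le_sup_right
  refine ⟨?_, ?_, ?_, ?_, map_sup_mem h1.TF h2.TF, map_sup_mem h1.TN h2.TN,
    map_sup_mem h1.DF h2.DF, map_sup_mem h1.DN h2.DN⟩
  · rw [sup_sup_sup_comm, h1.sup, h2.sup]
  · exact (h1.perp.sup_right (hp.mono a1 a4)).sup_left
      ((((hp.symm hf).mono a3 a2)).sup_right h2.perp)
  · exact (ND_sup hf h1.ndF h2.ndF (hp.mono a1 a3)).1
  · exact (ND_sup hf h1.ndN h2.ndN (hp.mono a2 a4)).1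

theorem Ach.add (hf : f.IsSymm) {W1 W2 : Submodule K V} (hp : Perp f W1 W2) {ε1 ε2 b1 b2 ε b : ℤ}
    (h1 : Ach f T D W1 ε1 b1) (h2 : Ach f T D W2 ε2 b2) (hε : ε = ε1 * ε2) (hb : b = b1 * b2) :
    Ach f T D (W1 ⊔ W2) ε b := by
  obtain ⟨F1, N1, h1, e1, d1⟩ := h1
  obtain ⟨F2, N2, h2, e2, d2⟩ := h2
  have a2 : N1 ≤ W1 := h1.sup ▸ le_sup_right
  have a4 : N2 ≤ W2 := h2.sup ▸ le_sup_right
  have hdis := (ND_sup hf h1.ndN h2.ndN (hp.mono a2 a4)).2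
  refine ⟨F1 ⊔ F2, N1 ⊔ N2, h1.add hf hp h2, ?_, ?_⟩
  · rw [finrank_sup_disj hdis, pow_add, e1, e2, hε]
  · rw [dsc_sup hf (hp.mono a2 a4) hdis, d1, d2, hb]

/-- the states -/
inductive State (f : LinearMap.BilinForm K V) (T D : Module.End K V) (W : Submodule K V)
    (Y : Set (ℕ × K)) : Prop
  | full (h : ∀ ε b, pm ε → pm b → Ach f T D W ε b) : State f T D W Y
  | fr (hn : finrank K W % 2 = 0)
      (h : ∀ b, pm b → Ach f T D W ((-1) ^ (finrank K W / 2)) b) : State f T D W Y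
  | dst (hn : finrank K W % 4 = 2) (δ : ℤ) (hδ : pm δ) (h1 : Ach f T D W 1 δ)
      (h2 : ∀ b, pm b → Ach f T D W (-1) b) : State f T D W Y
  | tt (A : Finset (ℕ × K)) (hA : ∀ p ∈ A, p ∈ Y ∧ 1 ≤ p.1 ∧ p.2 ^ 2 = 4) (a : ℤ) (J : ℕ)
      (ha : pm a) (hn : finrank K W = ∑ p ∈ A, (2 * p.1 - 1) + 4 * J)
      (h1 : Ach f T D W 1 ((-1) ^ (J + ∑ p ∈ A, p.1 / 2)))
      (h2 : A.Nonempty → Ach f T D W (-1) (a * (-1) ^ (J + ∑ p ∈ A, p.1 / 2))) : State f T D W Y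

theorem State.mono {W : Submodule K V} {Y Y' : Set (ℕ × K)} (h : State f T D W Y) (hY : Y ⊆ Y') :
    State f T D W Y' := by
  cases h with
  | full h => exact .full h
  | fr hn h => exact .fr hn h
  | dst hn δ hδ h1 h2 => exact .dst hn δ hδ h1 h2
  | tt A hA a J ha hn h1 h2 =>
    exact .tt A (fun p hp => ⟨hY (hA p hp).1, (hA p hp).2⟩) a J ha hn h1 h2

theorem State.ex {W : Submodule K V} {Y : Set (ℕ × K)} (h : State f T D W Y) :
    ∃ ε b, pm ε ∧ pm b ∧ Ach f T D W ε b := by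
  cases h with
  | full h => exact ⟨1, 1, .inl rfl, .inl rfl, h 1 1 (.inl rfl) (.inl rfl)⟩
  | fr hn h => exact ⟨_, 1, pm_pow _, .inl rfl, h 1 (.inl rfl)⟩
  | dst hn δ hδ h1 h2 => exact ⟨1, _, .inl rfl, hδ, h1⟩
  | tt A hA a J ha hn h1 h2 => exact ⟨1, _, .inl rfl, pm_pow _, h1⟩

theorem State.nd (hf : f.IsSymm) {W : Submodule K V} {Y : Set (ℕ × K)} (h : State f T D W Y) :
    ND f W := by
  obtain ⟨_, _, _, _, h⟩ := h.ex
  exact h.nd hf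

theorem full_of (hf : f.IsSymm) {W1 W2 : Submodule K V} (hp : Perp f W1 W2) {Y : Set (ℕ × K)}
    {ε0 b1 : ℤ} (h1 : ∀ b, pm b → Ach f T D W1 ε0 b) (hε0 : pm ε0) {b2 : ℤ} (hb1 : pm b1)
    (hb2 : pm b2) (h2 : Ach f T D W2 1 b1) (h3 : Ach f T D W2 (-1) b2) :
    State f T D (W1 ⊔ W2) Y := by
  refine .full fun ε b hε hb => ?_
  by_cases h : ε = ε0
  · exact (h1 (b * b1) (pm_mul hb hb1)).add hf hp h2 (by rw [h, mul_one])
      (by rw [mul_assoc, pm_sq hb1, mul_one])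
  · exact (h1 (b * b2) (pm_mul hb hb2)).add hf hp h3 (by rw [pm_ne hε hε0 h]; ring)
      (by rw [mul_assoc, pm_sq hb2, mul_one])

theorem full_of_full (hf : f.IsSymm) {W1 W2 : Submodule K V} (hp : Perp f W1 W2)
    {Y Y2 : Set (ℕ × K)} (h1 : ∀ ε b, pm ε → pm b → Ach f T D W1 ε b) (h2 : State f T D W2 Y2) :
    State f T D (W1 ⊔ W2) Y := by
  obtain ⟨ε2, b2, hε2, hb2, h2⟩ := h2.ex
  refine .full fun ε b hε hb => ?_
  exact (h1 (ε * ε2) (b * b2) (pm_mul hε hε2) (pm_mul hb hb2)).add hf hp h2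
    (by rw [mul_assoc, pm_sq hε2, mul_one]) (by rw [mul_assoc, pm_sq hb2, mul_one])

theorem State.add (hf : f.IsSymm) {W1 W2 : Submodule K V} (hp : Perp f W1 W2)
    {Y1 Y2 : Set (ℕ × K)} (hY : Disjoint Y1 Y2) (h1 : State f T D W1 Y1) (h2 : State f T D W2 Y2) :
    State f T D (W1 ⊔ W2) (Y1 ∪ Y2) := by
  have hdis := (ND_sup hf (h1.nd hf) (h2.nd hf) hp).2
  have hfr := finrank_sup_disj hdis
  have p1 : pm 1 := .inl rfl
  have p2 : pm (-1) := .inr rfl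
  have h1' := h1
  have h2' := h2
  have hp' := hp.symm hf
  cases h1 with
  | full h1 => exact full_of_full hf hp h1 h2
  | fr n1 h1 =>
    cases h2 with
    | full h2 => rw [sup_comm]; exact full_of_full hf hp' h2 h1'
    | fr n2 h2 =>
      refine .fr (by omega) fun b hb => ?_
      refine (h1 b hb).add hf hp (h2 1 p1) ?_ (by ring)
      rw [hfr, ← pow_add]; congr 1; omega
    | dst n2 δ hδ h2 h3 =>
      exact full_of hf hp h1 (pm_pow _) hδ p1 h2 (h3 1 p1)
    | tt A hA a J ha hn h2 h3 =>
      rcases A.eq_empty_or_nonempty with rfl | hne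
      · simp only [Finset.sum_empty, zero_add, add_zero] at *
        refine .fr (by omega) fun b hb => ?_
        refine (h1 (b * (-1) ^ J) (pm_mul hb (pm_pow J))).add hf hp h2 ?_ ?_
        · rw [hfr, hn, mul_one, show (finrank K W1 + 4 * J) / 2 = finrank K W1 / 2 + 2 * J by omega,
            pow_add, pow_mul]; simp
        · rw [mul_assoc, pm_sq (pm_pow J), mul_one]
      · exact full_of hf hp h1 (pm_pow _) (pm_pow _) (pm_mul ha (pm_pow _)) h2 (h3 hne)
  | dst n1 δ1 hδ1 h1 h1b =>
    cases h2 with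
    | full h2 => rw [sup_comm]; exact full_of_full hf hp' h2 h1'
    | fr n2 h2 => rw [sup_comm]; exact full_of hf hp' h2 (pm_pow _) hδ1 p1 h1 (h1b 1 p1)
    | dst n2 δ hδ h2 h3 => exact full_of hf hp h1b p2 hδ p1 h2 (h3 1 p1)
    | tt A hA a J ha hn h2 h3 =>
      rcases A.eq_empty_or_nonempty with rfl | hne
      · simp only [Finset.sum_empty, zero_add, add_zero] at *
        refine .dst (by omega) _ (pm_mul hδ1 (pm_pow J)) (h1.add hf hp h2 (by ring) rfl) ?_
        intro b hb
        exact (h1b (b * (-1) ^ J) (pm_mul hb (pm_pow J))).add hf hp h2 (by ring)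
          (by rw [mul_assoc, pm_sq (pm_pow J), mul_one])
      · exact full_of hf hp h1b p2 (pm_pow _) (pm_mul ha (pm_pow _)) h2 (h3 hne)
  | tt B hB b I hb hm h1 h1b =>
    cases h2 with
    | full h2 => rw [sup_comm]; exact full_of_full hf hp' h2 h1'
    | fr n2 h2 =>
      rcases B.eq_empty_or_nonempty with rfl | hne
      · simp only [Finset.sum_empty, zero_add, add_zero] at *
        refine .fr (by omega) fun b hb => ?_
        refine h1.add hf hp (h2 (b * (-1) ^ I) (pm_mul hb (pm_pow I))) ?_ ?_
        · rw [hfr, hm, one_mul, show (4 * I + finrank K W2) / 2 = finrank K W2 / 2 + 2 * I by omega,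
            pow_add, pow_mul]; simp
        · rw [mul_comm, mul_assoc, pm_sq (pm_pow I), mul_one]
      · rw [sup_comm]
        exact full_of hf hp' h2 (pm_pow _) (pm_pow _) (pm_mul hb (pm_pow _)) h1 (h1b hne)
    | dst n2 δ hδ h2 h3 =>
      rcases B.eq_empty_or_nonempty with rfl | hne
      · simp only [Finset.sum_empty, zero_add, add_zero] at *
        refine .dst (by omega) _ (pm_mul (pm_pow I) hδ) (h1.add hf hp h2 (by ring) rfl) ?_
        intro b hb
        exact h1.add hf hp (h3 (b * (-1) ^ I) (pm_mul hb (pm_pow I))) (by ring)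
          (by rw [mul_comm, mul_assoc, pm_sq (pm_pow I), mul_one])
      · rw [sup_comm]
        exact full_of hf hp' h3 p2 (pm_pow _) (pm_mul hb (pm_pow _)) h1 (h1b hne)
    | tt A hA a J ha hn h2 h3 =>
      by_cases hab : B.Nonempty ∧ A.Nonempty ∧ a ≠ b
      · obtain ⟨hBn, hAn, hne⟩ := hab
        have e1 := h1.add hf hp h2 rfl rfl
        have e2 := (h1b hBn).add hf hp h2 rfl rfl
        have e3 := h1.add hf hp (h3 hAn) rfl rfl
        have e4 := (h1b hBn).add hf hp (h3 hAn) rfl rfl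
        have hab := pm_ne ha hb hne
        subst hab
        generalize (-1 : ℤ) ^ (I + ∑ p ∈ B, p.1 / 2) = s at *
        generalize (-1 : ℤ) ^ (J + ∑ p ∈ A, p.1 / 2) = s' at *
        have hs : pm s ∧ pm s' := by
          obtain ⟨F, N, hc, -, rfl⟩ := h1
          obtain ⟨F', N', hc', -, rfl⟩ := h2
          exact ⟨dsc_pm hf hc.ndN, dsc_pm hf hc'.ndN⟩
        obtain ⟨hs, hs'⟩ := hs
        refine .full fun ε c hε hc => ?_
        rcases hs with rfl | rfl <;> rcases hs' with rfl | rfl <;> rcases hb with rfl | rfl <;>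
          rcases hε with rfl | rfl <;> rcases hc with rfl | rfl <;> simp at e1 e2 e3 e4 <;>
          assumption
      · have hAB : Disjoint B A := by
          rw [Finset.disjoint_left]
          intro p hpB hpA
          exact Set.disjoint_left.1 hY (hB p hpB).1 (hA p hpA).1
        refine .tt (B.disjUnion A hAB) ?_ (if B.Nonempty then b else a) (I + J) ?_ ?_ ?_ ?_
        · intro p hp
          rw [Finset.mem_disjUnion] at hp
          rcases hp with hp | hp
          · exact ⟨.inl (hB p hp).1, (hB p hp).2⟩
          · exact ⟨.inr (hA p hp).1, (hA p hp).2⟩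
        · split_ifs <;> assumption
        · rw [hfr, hm, hn, Finset.sum_disjUnion]; ring
        · rw [Finset.sum_disjUnion]
          refine h1.add hf hp h2 (by ring) ?_
          rw [← pow_add]; congr 1; ring
        · intro hne
          rw [Finset.sum_disjUnion]
          by_cases hBn : B.Nonempty
          · rw [if_pos hBn]
            refine (h1b hBn).add hf hp h2 (by ring) ?_
            rw [mul_assoc, ← pow_add]; congr 2; ring
          · rw [if_neg hBn]
            have hAn : A.Nonempty := by
              obtain ⟨p, hp⟩ := hne
              rw [Finset.mem_disjUnion] at hp
              rcases hp with hp | hp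
              · exact absurd ⟨p, hp⟩ hBn
              · exact ⟨p, hp⟩
            refine h1.add hf hp (h3 hAn) (by ring) ?_
            rw [mul_left_comm, ← pow_add]; congr 2; ring

theorem State.bot (hf : f.IsSymm) (Y : Set (ℕ × K)) : State f T D ⊥ Y := by
  have hnd : ND f (⊥ : Submodule K V) := fun x hx _ => by simpa using hx
  have h0 : ∀ L : Module.End K V, ∀ x ∈ (⊥ : Submodule K V), L x ∈ (⊥ : Submodule K V) := by
    intro L x hx
    rw [Submodule.mem_bot] at hx ⊢
    rw [hx, map_zero]
  refine .tt ∅ (by simp) 1 0 (.inl rfl) (by simp) ?_ (by simp)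
  refine ⟨⊥, ⊥, ⟨by simp, ?_, hnd, hnd, h0 T, h0 T, h0 D, h0 D⟩, by simp, by simp [dsc_bot]⟩
  intro x hx y hy
  rw [Submodule.mem_bot] at hx
  simp [hx]

end fin

section sys
variable {f : LinearMap.BilinForm K V} {T D : Module.End K V}

theorem Sys.adj (S : Sys f T D) (p : K[X]) (x y : V) :
    f (aeval T p x) y = f x (aeval T p y) := aadj S.hT p x y

theorem Sys.acomm (S : Sys f T D) (p : K[X]) (x : V) : aeval T p (D x) = D (aeval T p x) := by
  have h : Commute T D := LinearMap.ext S.comm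
  have : Commute (aeval T p) D := by
    induction p using Polynomial.induction_on' with
    | add p q hp hq => rw [map_add]; exact hp.add_left hq
    | monomial n a =>
      rw [aeval_monomial]
      exact (show Commute (algebraMap K (Module.End K V) a) D from Algebra.commutes a D).mul_left (h.pow_left n)
  exact LinearMap.congr_fun this.eq x

theorem Sys.DD (S : Sys f T D) (x : V) : D (D x) = aeval T (X ^ 2 - C 4 : K[X]) x := by
  rw [S.sq, map_sub, LinearMap.sub_apply, aeval_C, Module.algebraMap_end_apply, pow_two, amul,
    aeval_X]

theorem Sys.skew0 (S : Sys f T D) (p : K[X]) (x : V) : f (aeval T p x) (D x) = 0 := by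
  have h : f (aeval T p x) (D x) = - f (aeval T p x) (D x) := by
    conv_lhs => rw [S.symm.eq, S.hD, ← S.acomm, ← S.adj]
  have h2 : (2 : K) * f (aeval T p x) (D x) = 0 := by linear_combination h
  exact (mul_eq_zero.1 h2).resolve_left S.two

theorem Sys.fDD (S : Sys f T D) (p q : K[X]) (x y : V) :
    f (aeval T p (D x)) (aeval T q (D y)) = - f (aeval T (p * (X ^ 2 - C 4)) x) (aeval T q y) := by
  rw [S.acomm, S.acomm, S.hD, S.DD, ← amul, ← S.adj, ← amul, ← S.adj q, ← amul]
  congr 3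
  ring_nf

theorem Sys.perpZ (S : Sys f T D) (x : V) : Perp f (Z T x) (Z T (D x)) := by
  rintro _ ⟨p, rfl⟩ _ ⟨q, rfl⟩
  rw [ev_apply, ev_apply, ← S.adj, ← amul]
  exact S.skew0 _ x

theorem Sys.DZ (S : Sys f T D) (x : V) : ∀ y ∈ Z T x, D y ∈ Z T (D x) := by
  rintro _ ⟨p, rfl⟩
  exact ⟨p, by rw [ev_apply, ev_apply, S.acomm]⟩

theorem Sys.DZD (S : Sys f T D) (x : V) : ∀ y ∈ Z T (D x), D y ∈ Z T x := by
  rintro _ ⟨p, rfl⟩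
  exact ⟨p * (X ^ 2 - C 4), by rw [ev_apply, ev_apply, ← S.acomm, S.DD, ← amul]⟩

theorem Sys.conf (S : Sys f T D) {x : V} (h1 : ND f (Z T x)) (h2 : ND f (Z T (D x))) :
    Conf f T D (Z T x ⊔ Z T (D x)) (Z T x) (Z T (D x)) :=
  ⟨rfl, S.perpZ x, h1, h2, Z_inv T x, Z_inv T _, S.DZ x, S.DZD x⟩

end sys

section fin
variable [Fintype K] [DecidableEq K] [FiniteDimensional K V]
variable {f : LinearMap.BilinForm K V} {T D : Module.End K V}

theorem gen_base (S : Sys f T D) {x : V} {r : K[X]} (hr : Irreducible r) (hm : r.Monic) {e : ℕ}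
    (h0 : aeval T (r ^ e) x = 0) {t : K[X]} (hg : f (aeval T (t * r ^ (e - 1)) x) x ≠ 0)
    (hc : IsCoprime r (X ^ 2 - C 4)) :
    Conf f T D (Z T x ⊔ Z T (D x)) (Z T (D x)) (Z T x) ∧ finrank K (Z T x) = e * r.natDegree ∧
    finrank K (Z T x ⊔ Z T (D x) : Submodule K V) = 2 * (e * r.natDegree) := by
  have hx : aeval T (r ^ (e - 1)) x ≠ 0 := by
    intro h; rw [amul, h] at hg; simp at hg
  have hce : IsCoprime (r ^ e) (X ^ 2 - C 4) := hc.pow_left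
  have hdv : ∀ p : K[X], aeval T (p * (X ^ 2 - C 4)) x = 0 → r ^ e ∣ p := fun p hp =>
    hce.dvd_of_dvd_mul_right (ann_dvd hr h0 (fun _ => hx) hp)
  have hz : ∀ p : K[X], r ^ e ∣ p → aeval T p x = 0 := by
    rintro _ ⟨c, rfl⟩
    rw [mul_comm, amul, h0, map_zero]
  have n1 : ND f (Z T x) := cyc_ND S.hT hr h0 hg
  have n2 : ND f (Z T (D x)) := by
    rintro _ ⟨p, rfl⟩ hy
    rw [ev_apply, S.acomm, hz p ?_, map_zero]
    apply hdv
    apply n1 _ (aeval_mem_Z _ _ _)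
    rintro _ ⟨q, rfl⟩
    have := hy _ (aeval_mem_Z T (D x) q)
    rwa [ev_apply, S.fDD, neg_eq_zero] at this
  have k1 := cyc_finrank hr hm h0 (fun _ => hx)
  have k2 : finrank K (Z T (D x)) = e * r.natDegree := by
    apply cyc_finrank hr hm
    · rw [S.acomm, h0, map_zero]
    · intro _ h
      apply hx
      apply hz
      apply hdv
      rw [amul, ← S.DD, S.acomm, S.acomm, ← S.acomm, h, map_zero]
  refine ⟨(S.conf n1 n2).swap S.symm, k1, ?_⟩
  rw [finrank_sup_disj (ND_sup S.symm n1 n2 (S.perpZ x)).2, k1, k2, two_mul]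

theorem det_form {L : Type*} [Field L] [Algebra K L] {n : Type*} [Fintype n] [DecidableEq n]
    (b : Basis n K L) (l : L →ₗ[K] K) (w : L) :
    (Matrix.of fun i j => l (b i * b j * w)).det
      = Algebra.norm K w * (Matrix.of fun i j => l (b i * b j)).det := by
  rw [Algebra.norm_eq_matrix_det b, mul_comm, ← Matrix.det_mul]
  congr 1
  ext i j
  rw [Matrix.mul_apply]
  simp only [Matrix.of_apply, Algebra.leftMulMatrix_eq_repr_mul]
  have : b j * w = ∑ k, b.repr (w * b j) k • b k := by rw [b.sum_repr, mul_comm]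
  rw [mul_assoc, this, Finset.mul_sum, map_sum]
  refine Finset.sum_congr rfl fun k _ => ?_
  rw [mul_smul_comm, map_smul, smul_eq_mul, mul_comm]

theorem exists_ab {L : Type*} [Field L] [Algebra K L] [FiniteDimensional K L] (h2 : (2 : K) ≠ 0)
    {c : L} (hc : c ≠ 0) : ∃ a b : L, Algebra.norm K (a ^ 2 - b ^ 2 * c) = -1 := by
  have : Finite L := Module.finite_of_finite K
  have := Fintype.ofFinite L
  obtain ⟨ν, hν⟩ := FiniteField.norm_surjective K L (-1)
  have hch : ringChar L ≠ 2 := by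
    intro h
    have h3 : (2 : L) = 0 := by
      have := ringChar.Nat.cast_ringChar (R := L)
      rw [h] at this; exact_mod_cast this
    apply h2
    apply (algebraMap K L).injective
    rw [map_ofNat, h3, map_zero]
  obtain ⟨a, b, hab⟩ := FiniteField.exists_root_sum_quadratic (R := L) (f := X ^ 2 - C ν)
    (g := C (-c) * X ^ 2) (degree_X_pow_sub_C (by norm_num) ν)
    (by rw [degree_C_mul (neg_ne_zero.2 hc), degree_X_pow]; rfl)
    (FiniteField.odd_card_of_char_ne_two hch)
  refine ⟨a, b, ?_⟩
  rw [← hν]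
  congr 1
  simp at hab
  linear_combination hab

theorem gen_twist (S : Sys f T D) (hm1 : quadraticChar K (-1) = -1) {x : V} {r : K[X]}
    (hr : Irreducible r) (hm : r.Monic) {h : ℕ}
    (h0 : aeval T (r ^ (2 * h + 1)) x = 0) {t : K[X]} (hg : f (aeval T (t * r ^ (2 * h)) x) x ≠ 0)
    (hc : IsCoprime r (X ^ 2 - C 4)) :
    ∃ (x' : V) (t' : K[X]), x' ∈ Z T x ⊔ Z T (D x) ∧ aeval T (r ^ (2 * h + 1)) x' = 0 ∧
      f (aeval T (t' * r ^ (2 * h)) x') x' ≠ 0 ∧ dsc f (Z T x') = - dsc f (Z T x) := by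
  have : Fact (Irreducible r) := ⟨hr⟩
  let pb := AdjoinRoot.powerBasis' hm
  have : FiniteDimensional K (AdjoinRoot r) := pb.finite
  have hc0 : AdjoinRoot.mk r (X ^ 2 - C 4) ≠ 0 := by
    intro h
    rw [AdjoinRoot.mk_eq_zero] at h
    exact hr.not_isUnit (hc.isUnit_of_dvd' dvd_rfl h)
  obtain ⟨α, β, hn⟩ := exists_ab (K := K) S.two hc0
  obtain ⟨a, rfl⟩ := AdjoinRoot.mk_surjective α
  obtain ⟨b, rfl⟩ := AdjoinRoot.mk_surjective β
  set w : K[X] := a ^ 2 - b ^ 2 * (X ^ 2 - C 4) with hw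
  have hwm : AdjoinRoot.mk r w = AdjoinRoot.mk r a ^ 2 - AdjoinRoot.mk r b ^ 2 *
      AdjoinRoot.mk r (X ^ 2 - C 4) := by simp [hw]
  rw [← hwm] at hn
  have hw0 : ¬ r ^ 1 ∣ w := by
    intro hd
    rw [pow_one, ← AdjoinRoot.mk_eq_zero] at hd
    rw [hd, Algebra.norm_zero] at hn
    exact (neg_ne_zero.2 one_ne_zero) hn.symm
  set x' := aeval T a x + aeval T b (D x) with hx'
  have hform : ∀ p : K[X], f (aeval T p x') x' = f (aeval T (p * w) x) x := by
    intro p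
    rw [hx']
    simp only [map_add, LinearMap.add_apply]
    have e1 : f (aeval T p (aeval T b (D x))) (aeval T a x) = 0 := by
      rw [S.symm.eq, ← amul, ← S.adj, ← amul]; exact S.skew0 _ _
    have e2 : f (aeval T p (aeval T a x)) (aeval T b (D x)) = 0 := by
      rw [← S.adj, ← amul, ← amul]; exact S.skew0 _ _
    rw [e1, e2, ← amul, ← amul, S.fDD, ← S.adj, ← S.adj, ← amul, ← amul, hw]
    rw [show p * (a ^ 2 - b ^ 2 * (X ^ 2 - C 4)) = a * (p * a) - b * (p * b * (X ^ 2 - C 4)) by ring,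
      map_sub (aeval (R := K) T)]
    simp
    ring
  have hxr : aeval T (r ^ (2 * h + 1)) x' = 0 := by
    rw [hx', map_add, ← amul, ← amul, mul_comm, amul, h0, mul_comm, amul, S.acomm, h0]
    simp
  obtain ⟨u, v, huv⟩ := bez hr hw0
  rw [Nat.sub_self, pow_zero, pow_one] at huv
  have hg' : f (aeval T (t * u * r ^ (2 * h)) x') x' ≠ 0 := by
    rw [hform]
    have : t * u * r ^ (2 * h) * w = t * r ^ (2 * h) - t * v * r ^ (2 * h + 1) := by
      rw [pow_succ]; linear_combination (- t * r ^ (2 * h)) * huv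
    rw [this, map_sub, LinearMap.sub_apply, amul T (t * v), h0, map_zero, sub_zero]
    exact hg
  refine ⟨x', t * u, ?_, hxr, hg', ?_⟩
  · exact Submodule.add_mem_sup (aeval_mem_Z _ _ _) (aeval_mem_Z _ _ _)
  rw [cyc_dsc_odd S.symm hm1 S.hT hr hm hxr hg', cyc_dsc_odd S.symm hm1 S.hT hr hm h0 hg,
    ← mul_neg]
  congr 1
  let l0 : K[X] →ₗ[K] K := (f.flip x) ∘ₗ (ev T x) ∘ₗ (LinearMap.mulLeft K (r ^ (2 * h)))
  let l : AdjoinRoot r →ₗ[K] K := l0 ∘ₗ (AdjoinRoot.modByMonicHom hm)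
  have hl : ∀ p : K[X], l (AdjoinRoot.mk r p) = f (aeval T (p * r ^ (2 * h)) x) x := by
    intro p
    change f (aeval T (r ^ (2 * h) * AdjoinRoot.modByMonicHom hm (AdjoinRoot.mk r p)) x) x = _
    rw [AdjoinRoot.modByMonicHom_mk]
    conv_rhs => rw [← modByMonic_add_div p r]
    rw [show (p %ₘ r + r * (p /ₘ r)) * r ^ (2 * h) = r ^ (2 * h) * (p %ₘ r) +
      (p /ₘ r) * r ^ (2 * h + 1) by ring, map_add (aeval (R := K) T), LinearMap.add_apply, amul T (p /ₘ r),
      h0, map_zero, add_zero]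
  let bas : Basis (Fin r.natDegree) K (AdjoinRoot r) := pb.basis
  have hpb : ∀ i : Fin r.natDegree, bas i = AdjoinRoot.mk r (X ^ (i : ℕ)) := by
    intro i
    refine (pb.basis_eq_pow i).trans ?_
    rw [map_pow]; rfl
  have key := det_form (n := Fin r.natDegree) bas l (AdjoinRoot.mk r w)
  have m1 : (Matrix.of fun i j : Fin r.natDegree => l (bas i * bas j * AdjoinRoot.mk r w))
      = Matrix.of fun i j : Fin r.natDegree =>
        f (aeval T (X ^ (i : ℕ) * X ^ (j : ℕ) * r ^ (2 * h) : K[X]) x') x' := by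
    ext i j
    rw [Matrix.of_apply, Matrix.of_apply, hpb, hpb, ← map_mul, ← map_mul, hl, hform]
    congr 3
    ring_nf
  have m2 : (Matrix.of fun i j : Fin r.natDegree => l (bas i * bas j))
      = Matrix.of fun i j : Fin r.natDegree =>
        f (aeval T (X ^ (i : ℕ) * X ^ (j : ℕ) * r ^ (2 * h) : K[X]) x) x := by
    ext i j
    rw [Matrix.of_apply, Matrix.of_apply, hpb, hpb, ← map_mul, hl]
  have key' : (Matrix.of fun i j : Fin r.natDegree =>
        f (aeval T (X ^ (i : ℕ) * X ^ (j : ℕ) * r ^ (2 * h) : K[X]) x') x').det = (-1) *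
      (Matrix.of fun i j : Fin r.natDegree =>
        f (aeval T (X ^ (i : ℕ) * X ^ (j : ℕ) * r ^ (2 * h) : K[X]) x) x).det := by
    rw [← m1, ← m2, ← hn]; exact key
  rw [key', map_mul, hm1, neg_one_mul]

theorem gen_block (S : Sys f T D) (hm1 : quadraticChar K (-1) = -1) {x : V} {r : K[X]}
    (hr : Irreducible r) (hm : r.Monic) {e : ℕ} (he : e ≠ 0)
    (h0 : aeval T (r ^ e) x = 0) (hg : f (aeval T (r ^ (e - 1)) x) x ≠ 0)
    (hc : IsCoprime r (X ^ 2 - C 4)) :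
    State f T D (Z T x ⊔ Z T (D x)) ∅ := by
  have hg1 : f (aeval T (1 * r ^ (e - 1)) x) x ≠ 0 := by rwa [one_mul]
  obtain ⟨c1, k1, k2⟩ := gen_base S hr hm h0 hg1 hc
  rcases Nat.even_or_odd' e with ⟨h, rfl | rfl⟩
  · refine .tt ∅ (by simp) 1 (h * r.natDegree) (.inl rfl) ?_ ?_ (by simp)
    · rw [k2, Finset.sum_empty]; ring
    · refine ⟨_, _, c1, ?_, ?_⟩
      · rw [k1, mul_assoc, pow_mul]; simp
      · rw [cyc_dsc_even S.symm hm1 S.hT hr hm h0 hg1]; simp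
  · rw [Nat.add_sub_cancel] at hg1
    obtain ⟨x', t', hx', h0', hg', hd⟩ := gen_twist S hm1 hr hm h0 hg1 hc
    obtain ⟨c1', k1', k2'⟩ := gen_base S hr hm h0' (t := t') (by rwa [Nat.add_sub_cancel]) hc
    have hle : Z T x' ⊔ Z T (D x') ≤ Z T x ⊔ Z T (D x) := by
      have hTi := map_sup_mem (Z_inv T x) (Z_inv T (D x))
      refine sup_le (Z_le hTi hx') (Z_le hTi ?_)
      rw [sup_comm]
      exact map_sup_mem (S.DZ x) (S.DZD x) x' hx'
    have heq := Submodule.eq_of_le_of_finrank_eq hle (by rw [k2, k2'])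
    rw [heq] at c1'
    refine .fr (by rw [k2]; omega) fun b hb => ?_
    rw [k2, Nat.mul_div_cancel_left _ two_pos]
    by_cases hbd : dsc f (Z T x) = b
    · exact ⟨_, _, c1, by rw [k1], hbd⟩
    · refine ⟨_, _, c1', by rw [k1'], ?_⟩
      rw [hd, pm_ne (dsc_pm S.symm c1.ndN) hb hbd, neg_neg]

end fin

theorem split_eval (c : K) (p : K[X]) : ∃ u : K[X], p = C (p.eval c) + u * (X - C c) := by
  obtain ⟨u, hu⟩ := X_sub_C_dvd_sub_C_eval (a := c) (p := p)
  exact ⟨u, by linear_combination hu⟩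

theorem fun_ext_pow (c : K) (l : K[X] →ₗ[K] K) (h : ∀ i : ℕ, l ((X - C c) ^ i) = 0) (p : K[X]) :
    l p = 0 := by
  have hp : p = (p.comp (X + C c)).comp (X - C c) := by
    rw [comp_assoc]; simp
  rw [hp]
  generalize p.comp (X + C c) = q
  induction q using Polynomial.induction_on' with
  | add p q hp hq => rw [add_comp, map_add, hp, hq, add_zero]
  | monomial n a => rw [monomial_comp, ← smul_eq_C_mul, map_smul, h, smul_zero]

theorem repr_fun (c : K) (e : ℕ) (l μ : K[X] →ₗ[K] K) (hl : ∀ p, l (p * (X - C c) ^ e) = 0)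
    (hμ : ∀ p, μ (p * (X - C c) ^ e) = 0) (h0 : l ((X - C c) ^ (e - 1)) ≠ 0) :
    ∃ q : K[X], ∀ p, l (p * q) = μ p := by
  have hlp : ∀ p i, e ≤ i → l (p * (X - C c) ^ i) = 0 := by
    intro p i hi
    rw [← Nat.sub_add_cancel hi, pow_add, ← mul_assoc]; exact hl _
  have key : ∀ j ≤ e, ∃ q : K[X], ∀ i, e ≤ i + j → l ((X - C c) ^ i * q) = μ ((X - C c) ^ i) := by
    intro j
    induction j with
    | zero =>
      intro _
      refine ⟨0, fun i hi => ?_⟩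
      have := hμ ((X - C c) ^ (i - e))
      rw [← pow_add, Nat.sub_add_cancel (by omega)] at this
      rw [mul_zero, map_zero, this]
    | succ j ih =>
      intro hj
      obtain ⟨q, hq⟩ := ih (by omega)
      set a : K := (μ ((X - C c) ^ (e - 1 - j)) - l ((X - C c) ^ (e - 1 - j) * q)) /
        l ((X - C c) ^ (e - 1)) with ha
      refine ⟨q + a • (X - C c) ^ j, fun i hi => ?_⟩
      rw [mul_add, map_add, mul_smul_comm, map_smul, ← pow_add, smul_eq_mul]
      rcases Nat.lt_or_ge (i + j) e with hlt | hge
      · obtain rfl : i = e - 1 - j := by omega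
        rw [show e - 1 - j + j = e - 1 by omega, ha, div_mul_cancel₀ _ h0]; ring
      · have := hlp 1 (i + j) hge
        rw [one_mul] at this
        rw [this, hq i hge, mul_zero, add_zero]
  obtain ⟨q, hq⟩ := key e le_rfl
  refine ⟨q, fun p => ?_⟩
  have := fun_ext_pow c (l ∘ₗ LinearMap.mulRight K q - μ) (fun i => by
    simp [hq i (by omega)]) p
  simpa [sub_eq_zero] using this

section sys
variable {f : LinearMap.BilinForm K V} {T D : Module.End K V}

theorem fac4 {c : K} (hc : c ^ 2 = 4) : (X ^ 2 - C 4 : K[X]) = (X - C c) * (X + C c) := by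
  rw [← hc, C_pow]; ring

/-- adjust the second vector -/
theorem adjust (S : Sys f T D) {c : K} (hc : c ^ 2 = 4) {e : ℕ} (he : e ≠ 0) {x y : V}
    (hx : aeval T ((X - C c) ^ e) x = 0) (hy : aeval T ((X - C c) ^ e) y = 0)
    (hg : f (aeval T ((X - C c) ^ (e - 1)) (D x)) y ≠ 0) :
    ∃ q : K[X], (∀ p : K[X], f (aeval T p x) (y + aeval T q (D y)) = 0) ∧
      f (aeval T ((X - C c) ^ (e - 1)) (D x)) (y + aeval T q (D y)) ≠ 0 := by
  obtain ⟨q, hq⟩ := repr_fun c e ((f.flip y) ∘ₗ (ev T (D x))) ((f.flip y) ∘ₗ (ev T x)) (by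
      intro p
      change f (aeval T (p * (X - C c) ^ e) (D x)) y = 0
      rw [amul, S.acomm, hx]; simp) (by
      intro p
      change f (aeval T (p * (X - C c) ^ e) x) y = 0
      rw [amul, hx]; simp) hg
  refine ⟨q, fun p => ?_, ?_⟩
  · have h1 : f (aeval T (p * q) (D x)) y = f (aeval T p x) y := hq p
    rw [map_add, ← h1, ← S.adj, ← amul, S.symm.eq (aeval T (q * p) x), S.hD, ← S.acomm,
      S.symm.eq y, mul_comm q, add_neg_cancel]
  · rw [map_add, S.fDD, fac4 hc, show (X - C c) ^ (e - 1) * ((X - C c) * (X + C c)) =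
      (X + C c) * (X - C c) ^ e by
        obtain ⟨k, rfl⟩ := Nat.exists_eq_succ_of_ne_zero he
        rw [Nat.succ_sub_one, Nat.succ_eq_add_one, pow_succ]; ring, amul, hx]
    simpa using hg

theorem hyp_key (S : Sys f T D) {c : K} (hc : c ^ 2 = 4) {e : ℕ} (he : e ≠ 0) {x y : V}
    (hx : aeval T ((X - C c) ^ e) x = 0) (hy : aeval T ((X - C c) ^ e) y = 0)
    (hg : f (aeval T ((X - C c) ^ (e - 1)) x) (D y) ≠ 0) (p q : K[X])
    (h1 : ∀ t : K[X], f (aeval T p x + aeval T q (D y)) (aeval T t x) = 0)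
    (h2 : ∀ t : K[X], f (aeval T p x + aeval T q (D y)) (aeval T t (D y)) = 0) :
    (X - C c) ^ e ∣ p ∧ (X - C c) ^ e ∣ q := by
  have key : ∀ j ≤ e, (X - C c) ^ j ∣ p ∧ (X - C c) ^ j ∣ q := by
    intro j
    induction j with
    | zero => intro _; simp
    | succ j ih =>
      intro hj
      obtain ⟨⟨p', hp'⟩, ⟨q', hq'⟩⟩ := ih (by omega)
      obtain ⟨u, hu⟩ := split_eval c p'
      obtain ⟨v, hv⟩ := split_eval c q'
      have hpow : (X - C c : K[X]) ^ j * (X - C c) ^ (e - 1 - j) = (X - C c) ^ (e - 1) := by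
        rw [← pow_add]; congr 1; omega
      have hpe : (X - C c : K[X]) ^ (e - 1) * (X - C c) = (X - C c) ^ e := by
        rw [← pow_succ]; congr 1; omega
      have ex : aeval T (p * (X - C c) ^ (e - 1 - j)) x
          = p'.eval c • aeval T ((X - C c) ^ (e - 1)) x := by
        have : p * (X - C c) ^ (e - 1 - j) = C (p'.eval c) * (X - C c) ^ (e - 1) +
            u * (X - C c) ^ e := by
          rw [← hpe, ← hpow, hp']; linear_combination ((X - C c) ^ j * (X - C c) ^ (e - 1 - j)) * hu
        rw [this, map_add, LinearMap.add_apply, amul, amul, hx, map_zero, add_zero, aeval_C,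
          Module.algebraMap_end_apply]
      have ey : aeval T (q * (X - C c) ^ (e - 1 - j)) (D y)
          = q'.eval c • aeval T ((X - C c) ^ (e - 1)) (D y) := by
        have : q * (X - C c) ^ (e - 1 - j) = C (q'.eval c) * (X - C c) ^ (e - 1) +
            v * (X - C c) ^ e := by
          rw [← hpe, ← hpow, hq']; linear_combination ((X - C c) ^ j * (X - C c) ^ (e - 1 - j)) * hv
        rw [this, map_add, LinearMap.add_apply, amul, amul, S.acomm ((X - C c) ^ e), hy, map_zero,
          map_zero, add_zero, aeval_C, Module.algebraMap_end_apply]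
      have a2 := h2 ((X - C c) ^ (e - 1 - j))
      have a1 := h1 ((X - C c) ^ (e - 1 - j))
      rw [← S.adj, map_add, ← amul, ← amul, mul_comm _ p, mul_comm _ q, ex, ey, map_add,
        LinearMap.add_apply, map_smul, map_smul, LinearMap.smul_apply, LinearMap.smul_apply]
        at a1 a2
      have z : f (aeval T ((X - C c) ^ (e - 1)) (D y)) (D y) = 0 := by
        have := S.fDD ((X - C c) ^ (e - 1)) 1 y y
        rw [fac4 hc, ← mul_assoc, hpe, mul_comm, amul, hy] at this
        simpa using this
      rw [z, smul_zero, add_zero, smul_eq_mul] at a2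
      have hpz := (mul_eq_zero.1 a2).resolve_right hg
      rw [hpz, zero_smul, zero_add, smul_eq_mul, S.adj, S.symm.eq] at a1
      rw [hpz, map_zero, zero_add] at hu
      have hqz := (mul_eq_zero.1 a1).resolve_right hg
      rw [hqz, map_zero, zero_add] at hv
      rw [hp', hq', hu, hv, pow_succ]
      exact ⟨⟨u, by ring⟩, ⟨v, by ring⟩⟩
  exact key e le_rfl

end sys

section fin
variable [Fintype K] [DecidableEq K] [FiniteDimensional K V]
variable {f : LinearMap.BilinForm K V} {T D : Module.End K V}

theorem hyp_half (S : Sys f T D) (hm1 : quadraticChar K (-1) = -1) {c : K} (hc : c ^ 2 = 4) {e : ℕ}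
    (he : e ≠ 0) {x y : V}
    (hx : aeval T ((X - C c) ^ e) x = 0) (hy : aeval T ((X - C c) ^ e) y = 0)
    (hg : f (aeval T ((X - C c) ^ (e - 1)) x) (D y) ≠ 0) :
    ND f (Z T x ⊔ Z T (D y)) ∧ finrank K (Z T x ⊔ Z T (D y) : Submodule K V) = 2 * e ∧
      dsc f (Z T x ⊔ Z T (D y)) = (-1) ^ e := by
  have hDy : aeval T ((X - C c) ^ e) (D y) = 0 := by rw [S.acomm, hy, map_zero]
  have x1 : aeval T ((X - C c) ^ (e - 1)) x ≠ 0 := by intro h; rw [h] at hg; simp at hg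
  have y1 : aeval T ((X - C c) ^ (e - 1)) (D y) ≠ 0 := by
    intro h; rw [S.adj, h] at hg; simp at hg
  have hz : ∀ {v : V} {p : K[X]}, aeval T ((X - C c) ^ e) v = 0 → (X - C c) ^ e ∣ p →
      aeval T p v = 0 := by
    rintro v _ hv ⟨p, rfl⟩; rw [mul_comm, amul, hv, map_zero]
  have hnd : ND f (Z T x ⊔ Z T (D y)) := by
    intro v hv hv2
    obtain ⟨_, ⟨p, rfl⟩, _, ⟨q, rfl⟩, rfl⟩ := Submodule.mem_sup.1 hv
    obtain ⟨a, b⟩ := hyp_key S hc he hx hy hg p q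
      (fun t => hv2 _ (Submodule.mem_sup_left (aeval_mem_Z _ _ _)))
      (fun t => hv2 _ (Submodule.mem_sup_right (aeval_mem_Z _ _ _)))
    rw [ev_apply, ev_apply, hz hx a, hz hDy b, add_zero]
  have hdis : Disjoint (Z T x) (Z T (D y)) := by
    rw [Submodule.disjoint_def]
    rintro v ⟨p, rfl⟩ ⟨q, hq⟩
    have h0 : aeval T p x + aeval T (-q) (D y) = 0 := by
      rw [ev_apply, ev_apply] at hq
      rw [map_neg, LinearMap.neg_apply, hq, add_neg_cancel]
    obtain ⟨a, b⟩ := hyp_key S hc he hx hy hg p (-q) (by rw [h0]; simp) (by rw [h0]; simp)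
    rw [ev_apply, hz hx a]
  have hir := irreducible_X_sub_C c
  have hmo := monic_X_sub_C c
  have k1 := cyc_finrank hir hmo hx (fun _ => x1)
  have k2 := cyc_finrank hir hmo hDy (fun _ => y1)
  have k : finrank K (Z T x ⊔ Z T (D y) : Submodule K V) = 2 * e := by
    rw [finrank_sup_disj hdis, k1, k2, natDegree_X_sub_C]; ring
  refine ⟨hnd, k, ?_⟩
  obtain ⟨a, b, hab, h2a, h2b⟩ : ∃ a b, a + b = e ∧ e ≤ 2 * a ∧ e ≤ 2 * b + 1 :=
    ⟨e - e / 2, e / 2, by omega, by omega, by omega⟩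
  have i1 : finrank K (Z T (aeval T ((X - C c) ^ a) x)) = b := by
    rw [cyc_finrank (e := b) hir hmo, natDegree_X_sub_C, mul_one]
    · rw [← amul, ← pow_add, show b + a = e by omega, hx]
    · intro hb
      rw [← amul, ← pow_add, show b - 1 + a = e - 1 by omega]; exact x1
  have i2 : finrank K (Z T (aeval T ((X - C c) ^ b) (D y))) = a := by
    rw [cyc_finrank (e := a) hir hmo, natDegree_X_sub_C, mul_one]
    · rw [← amul, ← pow_add, hab, hDy]
    · intro hb
      rw [← amul, ← pow_add, show a - 1 + b = e - 1 by omega]; exact y1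
  have l1 := Z_aeval_le T x ((X - C c) ^ a)
  have l2 := Z_aeval_le T (D y) ((X - C c) ^ b)
  have i3 : finrank K (Z T (aeval T ((X - C c) ^ a) x) ⊔ Z T (aeval T ((X - C c) ^ b) (D y)) :
      Submodule K V) = e := by
    rw [finrank_sup_disj (hdis.mono l1 l2), i1, i2]; omega
  rw [dsc_hyp S.symm hm1 hnd (sup_le_sup l1 l2) ?_ (by rw [i3, k]), i3]
  have hzz : ∀ {v : V} {n : ℕ} (p : K[X]), aeval T ((X - C c) ^ e) v = 0 → e ≤ n →
      aeval T (p * (X - C c) ^ n) v = 0 := fun p hv hn =>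
    hz hv (dvd_mul_of_dvd_right (pow_dvd_pow _ hn) _)
  have P12 : Perp f (Z T (aeval T ((X - C c) ^ a) x)) (Z T (aeval T ((X - C c) ^ b) (D y))) := by
    rintro _ ⟨p, rfl⟩ _ ⟨q, rfl⟩
    rw [ev_apply, ev_apply, ← amul, ← amul, S.adj, ← amul,
      show p * (X - C c) ^ a * (q * (X - C c) ^ b) = p * q * (X - C c) ^ (a + b) by ring,
      hzz _ hDy hab.ge, map_zero]
  refine (Perp.sup_right ?_ P12).sup_left ((P12.symm S.symm).sup_right ?_)
  · rintro _ ⟨p, rfl⟩ _ ⟨q, rfl⟩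
    rw [ev_apply, ev_apply, ← amul, ← amul, S.adj, ← amul,
      show p * (X - C c) ^ a * (q * (X - C c) ^ a) = p * q * (X - C c) ^ (2 * a) by ring,
      hzz _ hx h2a, map_zero]
  · rintro _ ⟨p, rfl⟩ _ ⟨q, rfl⟩
    rw [ev_apply, ev_apply, ← amul, ← amul, S.fDD, ← S.adj, ← amul, fac4 hc,
      show q * (X - C c) ^ b * (p * (X - C c) ^ b * ((X - C c) * (X + C c)))
        = (p * q * (X + C c)) * (X - C c) ^ (2 * b + 1) by ring, hzz _ hy h2b]
    simp

theorem hyp_block (S : Sys f T D) (hm1 : quadraticChar K (-1) = -1) {c : K} (hc : c ^ 2 = 4) {e : ℕ}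
    (he : e ≠ 0) {x y : V}
    (hx : aeval T ((X - C c) ^ e) x = 0) (hy : aeval T ((X - C c) ^ e) y = 0)
    (hg : f (aeval T ((X - C c) ^ (e - 1)) (D x)) y ≠ 0) (h0 : ∀ p : K[X], f (aeval T p x) y = 0) :
    State f T D ((Z T x ⊔ Z T (D y)) ⊔ (Z T y ⊔ Z T (D x))) ∅ := by
  have hgx : f (aeval T ((X - C c) ^ (e - 1)) x) (D y) ≠ 0 := by
    rw [S.symm.eq, S.hD, ← S.acomm, S.symm.eq]; exact neg_ne_zero.2 hg
  have hgy : f (aeval T ((X - C c) ^ (e - 1)) y) (D x) ≠ 0 := by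
    rw [S.adj, S.symm.eq]; exact hg
  obtain ⟨n1, k1, d1⟩ := hyp_half S hm1 hc he hx hy hgx
  obtain ⟨n2, k2, d2⟩ := hyp_half S hm1 hc he hy hx hgy
  have hp : Perp f (Z T x ⊔ Z T (D y)) (Z T y ⊔ Z T (D x)) := by
    refine (Perp.sup_right ?_ (S.perpZ x)).sup_left
      (Perp.sup_right ((S.perpZ y).symm S.symm) ?_)
    · rintro _ ⟨p, rfl⟩ _ ⟨q, rfl⟩
      rw [ev_apply, ev_apply, ← S.adj, ← amul]; exact h0 _
    · rintro _ ⟨p, rfl⟩ _ ⟨q, rfl⟩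
      rw [ev_apply, ev_apply, S.fDD, S.symm.eq, S.adj, S.symm.eq, ← amul, S.adj, S.symm.eq,
        h0, neg_zero]
  have hdis := (ND_sup S.symm n1 n2 hp).2
  refine .tt ∅ (by simp) 1 e (.inl rfl) ?_ ⟨_, _, ⟨rfl, hp, n1, n2, ?_, ?_, ?_, ?_⟩, ?_, ?_⟩ (by simp)
  · rw [finrank_sup_disj hdis, k1, k2, Finset.sum_empty]; ring
  · exact map_sup_mem (Z_inv _ _) (Z_inv _ _)
  · exact map_sup_mem (Z_inv _ _) (Z_inv _ _)
  · rw [sup_comm (Z T y)]; exact map_sup_mem (S.DZ x) (S.DZD y)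
  · rw [sup_comm (Z T x)]; exact map_sup_mem (S.DZ y) (S.DZD x)
  · rw [k2, pow_mul]; simp
  · rw [d2]; simp

end fin

section fin
variable [Fintype K] [DecidableEq K] [FiniteDimensional K V]
variable {f : LinearMap.BilinForm K V} {T D : Module.End K V}

/-- sign constant -/
noncomputable def kap (e : ℕ) (c : K) : ℤ := if e % 2 = 1 then 1 else quadraticChar K (2 * c)

theorem c_ne (S : Sys f T D) {c : K} (hc : c ^ 2 = 4) : (2 * c) ≠ 0 := by
  intro h
  rcases mul_eq_zero.1 h with h | h
  · exact S.two h
  · rw [h] at hc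
    have : (2 : K) * 2 = 0 := by linear_combination -hc
    rcases mul_eq_zero.1 this with h | h <;> exact S.two h

theorem kap_pm (S : Sys f T D) {c : K} (hc : c ^ 2 = 4) (e : ℕ) : pm (kap e c) := by
  unfold kap
  split_ifs
  · exact .inl rfl
  · exact quadraticChar_dichotomy (c_ne S hc)

theorem dsc_odd1 (S : Sys f T D) (hm1 : quadraticChar K (-1) = -1) {c : K} {x : V} {h : ℕ}
    (h0 : aeval T ((X - C c) ^ (2 * h + 1)) x = 0)
    (hg : f (aeval T ((X - C c) ^ (2 * h)) x) x ≠ 0) :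
    dsc f (Z T x) = (-1) ^ h * quadraticChar K (f (aeval T ((X - C c) ^ (2 * h)) x) x) := by
  rw [cyc_dsc_odd (t := 1) S.symm hm1 S.hT (irreducible_X_sub_C c) (monic_X_sub_C c) h0
    (by rwa [one_mul]), natDegree_X_sub_C, mul_one]
  congr 2
  have : ∀ n : ℕ, n = 1 → (Matrix.of fun i j : Fin n =>
        f (aeval T (X ^ (i : ℕ) * X ^ (j : ℕ) * (X - C c) ^ (2 * h) : K[X]) x) x).det =
        f (aeval T ((X - C c) ^ (2 * h)) x) x := by
    rintro _ rfl
    rw [Matrix.det_fin_one]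
    simp
  exact this _ rfl

theorem dsc_even1 (S : Sys f T D) (hm1 : quadraticChar K (-1) = -1) {c : K} {x : V} {h : ℕ}
    (h0 : aeval T ((X - C c) ^ (2 * h)) x = 0)
    (hg : f (aeval T ((X - C c) ^ (2 * h - 1)) x) x ≠ 0) :
    dsc f (Z T x) = (-1) ^ h := by
  rw [cyc_dsc_even (t := 1) S.symm hm1 S.hT (irreducible_X_sub_C c) (monic_X_sub_C c) h0
    (by rwa [one_mul]), natDegree_X_sub_C, mul_one]

/-- data of an odd unipotent vector -/
structure Uv (f : LinearMap.BilinForm K V) (T D : Module.End K V) (c : K) (e : ℕ) (x : V) :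
    Prop where
  h0 : aeval T ((X - C c) ^ e) x = 0
  h1 : aeval T ((X - C c) ^ (e - 1)) (D x) = 0
  hg : f (aeval T ((X - C c) ^ (e - 1)) x) x ≠ 0

theorem unip_base (S : Sys f T D) (hm1 : quadraticChar K (-1) = -1) {c : K} (hc : c ^ 2 = 4) {e : ℕ}
    (he : e ≠ 0) {x : V} (h : Uv f T D c e x) :
    Ach f T D (Z T x ⊔ Z T (D x)) 1 ((-1) ^ (e / 2)) ∧
    Ach f T D (Z T x ⊔ Z T (D x)) (-1) (kap e c *
      quadraticChar K (f (aeval T ((X - C c) ^ (e - 1)) x) x) * (-1) ^ (e / 2)) ∧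
    finrank K (Z T x ⊔ Z T (D x) : Submodule K V) = 2 * e - 1 := by
  obtain ⟨h0, h1, hg⟩ := h
  have hir := irreducible_X_sub_C c
  have hmo := monic_X_sub_C c
  have hne : ∀ {v w : V}, f v w ≠ 0 → v ≠ 0 := by rintro v w h rfl; simp at h
  have n1 : ND f (Z T x) := cyc_ND (t := 1) S.hT hir h0 (by rwa [one_mul])
  have k1 : finrank K (Z T x) = e := by
    rw [cyc_finrank hir hmo h0 (fun _ => hne hg), natDegree_X_sub_C, mul_one]
  have hgy : 2 ≤ e → f (aeval T ((X - C c) ^ (e - 1 - 1)) (D x)) (D x) =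
      - (2 * c) * f (aeval T ((X - C c) ^ (e - 1)) x) x := by
    intro h2
    have := S.fDD ((X - C c) ^ (e - 1 - 1)) 1 x x
    rw [fac4 hc, show (X - C c) ^ (e - 1 - 1) * ((X - C c) * (X + C c)) =
      C (2 * c) * (X - C c) ^ (e - 1) + 1 * (X - C c) ^ e by
        obtain ⟨k, rfl⟩ : ∃ k, e = k + 2 := ⟨e - 2, by omega⟩
        rw [show k + 2 - 1 - 1 = k by omega, show k + 2 - 1 = k + 1 by omega, C_mul, map_ofNat]
        ring, map_add, LinearMap.add_apply, amul, amul, h0] at this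
    simp at this ⊢
    linear_combination this
  have hcn := c_ne S hc
  have n2k2 : ND f (Z T (D x)) ∧ finrank K (Z T (D x)) = e - 1 := by
    rcases Nat.lt_or_ge e 2 with hlt | hge
    · obtain rfl : e = 1 := by omega
      have hDx : D x = 0 := by simpa using h1
      have : Z T (D x) = ⊥ := by
        rw [eq_bot_iff]
        rintro _ ⟨p, rfl⟩
        simp [ev_apply, hDx]
      rw [this]
      exact ⟨fun x hx _ => by simpa using hx, by simp⟩
    · have hgy' : f (aeval T ((X - C c) ^ (e - 1 - 1)) (D x)) (D x) ≠ 0 := by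
        rw [hgy hge]; exact mul_ne_zero (neg_ne_zero.2 hcn) hg
      refine ⟨cyc_ND (t := 1) S.hT hir h1 (by rwa [one_mul]), ?_⟩
      rw [cyc_finrank hir hmo h1 (fun _ => hne hgy'), natDegree_X_sub_C, mul_one]
  obtain ⟨n2, k2⟩ := n2k2
  have cf := S.conf n1 n2
  have kU : finrank K (Z T x ⊔ Z T (D x) : Submodule K V) = 2 * e - 1 := by
    rw [finrank_sup_disj (ND_sup S.symm n1 n2 (S.perpZ x)).2, k1, k2]; omega
  rcases Nat.even_or_odd' e with ⟨h, rfl | rfl⟩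
  · obtain ⟨j, rfl⟩ : ∃ j, h = j + 1 := ⟨h - 1, by omega⟩
    refine ⟨⟨_, _, cf.swap S.symm, ?_, ?_⟩, ⟨_, _, cf, ?_, ?_⟩, kU⟩
    · rw [k1, pow_mul]; simp
    · rw [dsc_even1 S hm1 h0 hg]; congr 1; omega
    · rw [k2, show 2 * (j + 1) - 1 = 2 * j + 1 by omega, pow_succ, pow_mul]; simp
    · have hgy2 := hgy (by omega)
      rw [show 2 * (j + 1) - 1 - 1 = 2 * j by omega] at hgy2
      rw [show 2 * (j + 1) - 1 = 2 * j + 1 by omega] at *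
      have hne2 : f (aeval T ((X - C c) ^ (2 * j)) (D x)) (D x) ≠ 0 := by
        rw [hgy2]; exact mul_ne_zero (neg_ne_zero.2 hcn) hg
      rw [dsc_odd1 S hm1 h1 hne2, hgy2, map_mul, show -(2 * c) = (-1) * (2 * c) by ring, map_mul,
        hm1, kap, if_neg (by omega), Nat.mul_div_cancel_left _ two_pos, pow_succ]
      ring
  · refine ⟨⟨_, _, cf, ?_, ?_⟩, ⟨_, _, cf.swap S.symm, ?_, ?_⟩, kU⟩
    · rw [k2, Nat.add_sub_cancel, pow_mul]; simp
    · rw [show (2 * h + 1) / 2 = h by omega]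
      rcases Nat.eq_zero_or_pos h with rfl | hh
      · have hDx : D x = 0 := by simpa using h1
        have : Z T (D x) = ⊥ := by
          rw [eq_bot_iff]
          rintro _ ⟨p, rfl⟩
          simp [ev_apply, hDx]
        rw [this, dsc_bot, pow_zero]
      · have hgy2 := hgy (by omega)
        rw [Nat.add_sub_cancel] at *
        refine dsc_even1 S hm1 h1 ?_
        rw [hgy2]; exact mul_ne_zero (neg_ne_zero.2 hcn) hg
    · rw [k1, pow_succ, pow_mul]; simp
    · rw [Nat.add_sub_cancel] at *
      rw [dsc_odd1 S hm1 h0 hg, show (2 * h + 1) / 2 = h by omega, kap, if_pos (by omega)]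
      ring

theorem unip_single (S : Sys f T D) (hm1 : quadraticChar K (-1) = -1) {c : K} (hc : c ^ 2 = 4)
    {e : ℕ} (he : e ≠ 0) {x : V} (h : Uv f T D c e x) :
    State f T D (Z T x ⊔ Z T (D x)) {(e, c)} := by
  obtain ⟨a1, a2, k⟩ := unip_base S hm1 hc he h
  refine .tt {(e, c)} ?_ (kap e c * quadraticChar K (f (aeval T ((X - C c) ^ (e - 1)) x) x)) 0
    ?_ ?_ ?_ ?_
  · intro p hp
    rw [Finset.mem_singleton] at hp
    subst hp
    exact ⟨rfl, by simp; omega, hc⟩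
  · exact pm_mul (kap_pm S hc e) (quadraticChar_dichotomy h.hg)
  · rw [k, Finset.sum_singleton]; simp
  · simpa using a1
  · intro _; simpa using a2

theorem Zsup_le {W : Submodule K V} (hT : ∀ x ∈ W, T x ∈ W) (hD : ∀ x ∈ W, D x ∈ W) {x : V}
    (hx : x ∈ W) : Z T x ⊔ Z T (D x) ≤ W :=
  sup_le (Z_le hT hx) (Z_le hT (hD x hx))

theorem Sys.compl_inv (S : Sys f T D) {W U U' : Submodule K V} (hWT : ∀ x ∈ W, T x ∈ W)
    (hWD : ∀ x ∈ W, D x ∈ W) (hUT : ∀ x ∈ U, T x ∈ U) (hUD : ∀ x ∈ U, D x ∈ U)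
    (h : ∀ x, x ∈ U' ↔ x ∈ W ∧ ∀ y ∈ U, f y x = 0) :
    (∀ x ∈ U', T x ∈ U') ∧ (∀ x ∈ U', D x ∈ U') := by
  constructor
  · intro x hx
    rw [h] at hx ⊢
    exact ⟨hWT x hx.1, fun y hy => by rw [← S.hT]; exact hx.2 _ (hUT y hy)⟩
  · intro x hx
    rw [h] at hx ⊢
    refine ⟨hWD x hx.1, fun y hy => ?_⟩
    rw [S.symm.eq, S.hD, S.symm.eq, hx.2 _ (hUD y hy), neg_zero]

theorem Zsup_T (S : Sys f T D) (x : V) : ∀ y ∈ Z T x ⊔ Z T (D x), T y ∈ Z T x ⊔ Z T (D x) :=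
  map_sup_mem (Z_inv T x) (Z_inv T (D x))

theorem Zsup_D (S : Sys f T D) (x : V) : ∀ y ∈ Z T x ⊔ Z T (D x), D y ∈ Z T x ⊔ Z T (D x) := by
  have := map_sup_mem (S.DZ x) (S.DZD x)
  rwa [sup_comm (Z T (D x))] at this

theorem polar (S : Sys f T D) {W : Submodule K V} (p : K[X])
    (h : ∀ v ∈ W, f (aeval T p v) v = 0) : ∀ v ∈ W, ∀ w ∈ W, f (aeval T p v) w = 0 := by
  intro v hv w hw
  have h1 := h _ (W.add_mem hv hw)
  have h2 : f (aeval T p w) v = f (aeval T p v) w := by rw [S.adj, S.symm.eq]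
  rw [map_add, map_add, map_add, LinearMap.add_apply, LinearMap.add_apply, h v hv, h w hw, h2] at h1
  have : 2 * f (aeval T p v) w = 0 := by linear_combination h1
  exact (mul_eq_zero.1 this).resolve_left S.two

theorem quad_ab (h2 : (2 : K) ≠ 0) {g1 g2 d : K} (h1 : g1 ≠ 0) (hg2 : g2 ≠ 0) :
    ∃ a b : K, a ^ 2 * g1 + b ^ 2 * g2 = d := by
  have hch : ringChar K ≠ 2 := by
    intro h
    apply h2
    have := ringChar.Nat.cast_ringChar (R := K)
    rw [h] at this; exact_mod_cast this
  obtain ⟨a, b, hab⟩ := FiniteField.exists_root_sum_quadratic (R := K) (f := C g1 * X ^ 2 - C d)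
    (g := C g2 * X ^ 2)
    (by rw [degree_sub_C] <;> rw [degree_C_mul h1, degree_X_pow] <;> simp)
    (by rw [degree_C_mul hg2, degree_X_pow]; rfl)
    (FiniteField.odd_card_of_char_ne_two hch)
  refine ⟨a, b, ?_⟩
  simp at hab
  linear_combination hab

theorem unip_pair (S : Sys f T D) (hm1 : quadraticChar K (-1) = -1) {c : K} (hc : c ^ 2 = 4)
    {e : ℕ} (he : e ≠ 0) {x y : V} (hx : Uv f T D c e x) (hy : Uv f T D c e y)
    (hp : Perp f (Z T x ⊔ Z T (D x)) (Z T y ⊔ Z T (D y))) (Y : Set (ℕ × K)) :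
    State f T D ((Z T x ⊔ Z T (D x)) ⊔ (Z T y ⊔ Z T (D y))) Y := by
  obtain ⟨a1, a2, k1⟩ := unip_base S hm1 hc he hx
  obtain ⟨b1, b2, k2⟩ := unip_base S hm1 hc he hy
  have hgx := hx.hg
  have hgy := hy.hg
  set g1 := f (aeval T ((X - C c) ^ (e - 1)) x) x with hg1
  set g2 := f (aeval T ((X - C c) ^ (e - 1)) y) y with hg2
  have pk := kap_pm S hc e
  have p1 : pm (quadraticChar K g1) := quadraticChar_dichotomy hgx
  have p2 : pm (quadraticChar K g2) := quadraticChar_dichotomy hgy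
  have ps := pm_pow (e / 2)
  have ss := pm_sq ps
  have hdis := (ND_sup S.symm (a1.nd S.symm) (b1.nd S.symm) hp).2
  set U := (Z T x ⊔ Z T (D x)) ⊔ (Z T y ⊔ Z T (D y)) with hU
  have kU : finrank K U = 2 * (2 * e - 1) := by
    rw [hU, finrank_sup_disj hdis, k1, k2]; omega
  have r1 : Ach f T D U 1 1 := a1.add S.symm hp b1 (by ring) ss.symm
  have r2 : Ach f T D U (-1) (kap e c * quadraticChar K g1) :=
    a2.add S.symm hp b1 (by ring) (by rw [mul_assoc _ _ ((-1) ^ (e / 2)), ss, mul_one])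
  have r3 : Ach f T D U (-1) (kap e c * quadraticChar K g2) :=
    a1.add S.symm hp b2 (by ring) (by
      linear_combination (-(kap e c * quadraticChar K g2)) * ss)
  by_cases hχ : quadraticChar K g1 = quadraticChar K g2
  · refine .dst (by omega) 1 (.inl rfl) r1 fun b hb => ?_
    by_cases hbk : b = kap e c * quadraticChar K g1
    · rw [hbk]; exact r2
    have hbk' := pm_ne hb (pm_mul pk p1) hbk
    obtain ⟨α, β, hαβ⟩ := quad_ab S.two (d := -g1) hgx hgy
    have xU : x ∈ U := Submodule.mem_sup_left (Submodule.mem_sup_left (self_mem_Z _ _))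
    have yU : y ∈ U := Submodule.mem_sup_right (Submodule.mem_sup_left (self_mem_Z _ _))
    have UT : ∀ v ∈ U, T v ∈ U := map_sup_mem (Zsup_T S x) (Zsup_T S y)
    have UD : ∀ v ∈ U, D v ∈ U := map_sup_mem (Zsup_D S x) (Zsup_D S y)
    have hxy : ∀ p : K[X], f (aeval T p x) y = 0 := fun p =>
      hp _ (Submodule.mem_sup_left (aeval_mem_Z _ _ _)) _ (Submodule.mem_sup_left (self_mem_Z _ _))
    have hyx : ∀ p : K[X], f (aeval T p y) x = 0 := fun p => by
      rw [S.adj, S.symm.eq]; exact hxy p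
    -- everything in U is killed
    have kill : ∀ v ∈ U, aeval T ((X - C c) ^ e) v = 0 ∧
        aeval T ((X - C c) ^ (e - 1)) (D v) = 0 := by
      have kk : ∀ {x : V}, Uv f T D c e x → ∀ v ∈ Z T x ⊔ Z T (D x),
          aeval T ((X - C c) ^ e) v = 0 ∧ aeval T ((X - C c) ^ (e - 1)) (D v) = 0 := by
        intro x hx v hv
        obtain ⟨_, ⟨p, rfl⟩, _, ⟨q, rfl⟩, rfl⟩ := Submodule.mem_sup.1 hv
        rw [ev_apply, ev_apply]
        constructor
        · rw [map_add, ← amul, ← amul, mul_comm _ p, mul_comm _ q, amul, amul,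
            S.acomm ((X - C c) ^ e), hx.h0]
          simp
        · rw [map_add, map_add, ← S.acomm, ← amul, mul_comm _ p, amul, hx.h1, ← S.acomm, S.DD,
            ← amul, ← amul, fac4 hc, show (X - C c) ^ (e - 1) * q * ((X - C c) * (X + C c)) =
              (q * (X + C c)) * (X - C c) ^ e by
              obtain ⟨k, rfl⟩ := Nat.exists_eq_succ_of_ne_zero he
              rw [Nat.succ_sub_one, Nat.succ_eq_add_one, pow_succ]; ring, amul, hx.h0]
          simp
      intro v hv
      obtain ⟨u, hu, w, hw, rfl⟩ := Submodule.mem_sup.1 hv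
      obtain ⟨q1, q2⟩ := kk hx u hu
      obtain ⟨q3, q4⟩ := kk hy w hw
      rw [map_add, map_add, map_add, q1, q2, q3, q4]
      simp
    obtain ⟨z, hz⟩ : ∃ z, z = α • x + β • y := ⟨_, rfl⟩
    have zU : z ∈ U := hz ▸ U.add_mem (U.smul_mem _ xU) (U.smul_mem _ yU)
    have hgz : f (aeval T ((X - C c) ^ (e - 1)) z) z = - g1 := by
      rw [hz, ← hαβ]
      simp only [map_add, map_smul, LinearMap.add_apply, LinearMap.smul_apply, hxy, hyx, smul_eq_mul]
      rw [← hg1, ← hg2]; ring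
    have uz : Uv f T D c e z := ⟨(kill z zU).1, (kill z zU).2, by
      rw [hgz]; exact neg_ne_zero.2 hgx⟩
    obtain ⟨c1, c2, k3⟩ := unip_base S hm1 hc he uz
    have hzle : Z T z ⊔ Z T (D z) ≤ U := Zsup_le UT UD zU
    obtain ⟨U', hU', hsup, hperp, hdis', hnd'⟩ :=
      ND_compl S.symm (r1.nd S.symm) (c1.nd S.symm) hzle
    obtain ⟨U'T, U'D⟩ := S.compl_inv UT UD (Zsup_T S z) (Zsup_D S z) hU'
    have hw : ∃ w ∈ U', f (aeval T ((X - C c) ^ (e - 1)) w) w ≠ 0 := by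
      by_contra hcon
      push Not at hcon
      obtain ⟨v, hv⟩ : ∃ v, v = (-β * g2) • x + (α * g1) • y := ⟨_, rfl⟩
      have vU : v ∈ U := hv ▸ U.add_mem (U.smul_mem _ xU) (U.smul_mem _ yU)
      have e1 : f (aeval T ((X - C c) ^ (e - 1)) v) z = 0 := by
        rw [hz, hv]
        simp only [map_add, map_smul, LinearMap.add_apply, LinearMap.smul_apply, hxy, hyx,
          smul_eq_mul]
        rw [← hg1, ← hg2]; ring
      have e2 : f (aeval T ((X - C c) ^ (e - 1)) v) v ≠ 0 := by
        have : f (aeval T ((X - C c) ^ (e - 1)) v) v = g1 * g2 * (-g1) := by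
          rw [hv, ← hαβ]
          simp only [map_add, map_smul, LinearMap.add_apply, LinearMap.smul_apply, hxy, hyx,
            smul_eq_mul]
          rw [← hg1, ← hg2]; ring
        rw [this]
        exact mul_ne_zero (mul_ne_zero hgx hgy) (neg_ne_zero.2 hgx)
      rw [← hsup] at vU
      obtain ⟨u, hu, w, hw, huw⟩ := Submodule.mem_sup.1 vU
      have huT := amem (Zsup_T S z) ((X - C c) ^ (e - 1)) hu
      have hwT := amem U'T ((X - C c) ^ (e - 1)) hw
      have zZ : z ∈ Z T z ⊔ Z T (D z) := Submodule.mem_sup_left (self_mem_Z _ _)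
      obtain ⟨_, ⟨p, rfl⟩, _, ⟨q, rfl⟩, hpq⟩ := Submodule.mem_sup.1 hu
      obtain ⟨s, hs⟩ := split_eval c p
      have hpe : (X - C c : K[X]) ^ (e - 1) * (X - C c) = (X - C c) ^ e := by
        rw [← pow_succ]; congr 1; omega
      have eu : aeval T ((X - C c) ^ (e - 1)) u
          = p.eval c • aeval T ((X - C c) ^ (e - 1)) z := by
        rw [← hpq, ev_apply, ev_apply, map_add, ← amul, ← amul, mul_comm _ q, amul _ q, uz.h1,
          map_zero, add_zero]
        have : (X - C c) ^ (e - 1) * p = C (p.eval c) * (X - C c) ^ (e - 1) + s * (X - C c) ^ e := by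
          rw [← hpe]; linear_combination (X - C c) ^ (e - 1) * hs
        rw [this, map_add, LinearMap.add_apply, amul, amul, uz.h0, map_zero, add_zero, aeval_C,
          Module.algebraMap_end_apply]
      rw [← huw, map_add, map_add, LinearMap.add_apply, hperp.symm S.symm _ hwT _ zZ, add_zero, eu,
        map_smul, LinearMap.smul_apply, smul_eq_mul] at e1
      have hpz := (mul_eq_zero.1 e1).resolve_right uz.hg
      apply e2
      rw [← huw, map_add (aeval T ((X - C c) ^ (e - 1))) u w, eu, hpz, zero_smul, zero_add, map_add, hcon w hw, add_zero]
      exact hperp.symm S.symm _ hwT _ hu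
    obtain ⟨w, hwU, hwg⟩ := hw
    have wU : w ∈ U := by rw [← hsup]; exact Submodule.mem_sup_right hwU
    have uw : Uv f T D c e w := ⟨(kill w wU).1, (kill w wU).2, hwg⟩
    obtain ⟨d1, d2, k4⟩ := unip_base S hm1 hc he uw
    have hwle := Zsup_le U'T U'D hwU
    have kU' : finrank K U' = 2 * e - 1 := by
      have := finrank_sup_disj hdis'
      rw [hsup, kU, k3] at this
      omega
    have heq := Submodule.eq_of_le_of_finrank_eq hwle (by rw [k4, kU'])
    rw [heq] at d1
    rw [← hsup]
    refine c2.add S.symm hperp d1 (by ring) ?_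
    rw [mul_assoc _ _ ((-1) ^ (e / 2)), ss, mul_one, hgz, ← neg_one_mul g1, map_mul, hm1, hbk']
    ring
  · have h21 := pm_ne p1 p2 hχ
    have r4 : Ach f T D U 1 (-1) := a2.add S.symm hp b2 (by ring) (by
      rw [h21]
      generalize kap e c = k at pk
      generalize quadraticChar K g2 = g at p2
      generalize ((-1 : ℤ) ^ (e / 2)) = s at ps
      rcases pk with rfl | rfl <;> rcases p2 with rfl | rfl <;> rcases ps with rfl | rfl <;> simp)
    refine .full fun ε b hε hb => ?_
    rw [h21] at r2
    rcases pm_mul pk p2 with h | h <;> rw [mul_neg, h] at r2 <;> rw [h] at r3 <;>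
      rcases hε with rfl | rfl <;> rcases hb with rfl | rfl <;> (try simp at r2) <;> assumption

end fin

section fin
variable [Fintype K] [DecidableEq K] [FiniteDimensional K V]
variable {f : LinearMap.BilinForm K V} {T D : Module.End K V}

/-- the powers dividing every annihilating polynomial -/
def XW (T : Module.End K V) (W : Submodule K V) : Set (ℕ × K) :=
  {p | ∀ g : K[X], (∀ v ∈ W, aeval T g v = 0) → (X - C p.2) ^ p.1 ∣ g}

theorem XW_mono {W W' : Submodule K V} (h : W' ≤ W) : XW T W' ⊆ XW T W :=
  fun p hp g hg => hp g fun v hv => hg v (h hv)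

theorem exists_min (T : Module.End K V) {W : Submodule K V} (hW : W ≠ ⊥) :
    ∃ (r s : K[X]) (e : ℕ), Irreducible r ∧ r.Monic ∧ e ≠ 0 ∧ IsCoprime r s ∧
      (∀ v ∈ W, aeval T (r ^ e * s) v = 0) ∧
      (∀ g : K[X], (∀ v ∈ W, aeval T g v = 0) → r ^ e ∣ g) ∧
      ∃ v ∈ W, aeval T (r ^ (e - 1) * s) v ≠ 0 := by
  let I : Ideal K[X] :=
    { carrier := {g | ∀ v ∈ W, aeval T g v = 0}
      add_mem' := fun {a b} ha hb v hv => by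
        rw [map_add, LinearMap.add_apply, ha v hv, hb v hv, add_zero]
      zero_mem' := fun v hv => by simp
      smul_mem' := fun c a ha v hv => by rw [smul_eq_mul, amul, ha v hv, map_zero] }
  have hI : ∀ g, g ∈ I ↔ ∀ v ∈ W, aeval T g v = 0 := fun g => Iff.rfl
  let μ := Submodule.IsPrincipal.generator I
  have hμ : ∀ g, g ∈ I ↔ μ ∣ g := fun g => Submodule.IsPrincipal.mem_iff_generator_dvd I
  have hμI : μ ∈ I := (hμ μ).2 dvd_rfl
  have hμ0 : μ ≠ 0 := by
    intro h
    have : minpoly K T ∈ I := fun v hv => by rw [minpoly.aeval]; rfl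
    rw [hμ, h, zero_dvd_iff] at this
    exact minpoly.ne_zero (Algebra.IsIntegral.isIntegral T) this
  have hμu : ¬ IsUnit μ := by
    intro h
    have : (1 : K[X]) ∈ I := (hμ 1).2 h.dvd
    apply hW
    rw [eq_bot_iff]
    intro v hv
    simpa using (hI 1).1 this v hv
  obtain ⟨r, hm, hir, hr⟩ := Polynomial.exists_monic_irreducible_factor μ hμu
  obtain ⟨s, hs, hns⟩ := (FiniteMultiplicity.of_not_isUnit hir.not_isUnit hμ0
    : FiniteMultiplicity r μ).exists_eq_pow_mul_and_not_dvd
  set e := multiplicity r μ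
  have he : e ≠ 0 := by
    intro h
    rw [h, pow_zero, one_mul] at hs
    exact hns (hs ▸ hr)
  refine ⟨r, s, e, hir, hm, he, (hir.coprime_iff_not_dvd).2 hns, ?_, ?_, ?_⟩
  · rw [← hs]; exact hμI
  · intro g hg
    exact (Dvd.intro s hs.symm).trans ((hμ g).1 hg)
  · by_contra hcon
    push Not at hcon
    have h1 : μ ∣ r ^ (e - 1) * s := (hμ _).1 hcon
    have hs0 : s ≠ 0 := by rintro rfl; simp at hns
    rw [hs, mul_dvd_mul_iff_right hs0,
      pow_dvd_pow_iff hir.ne_zero hir.not_isUnit] at h1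
    omega

theorem sq_ne {r s : K[X]} (hc : IsCoprime r s) {e : ℕ} (he : e ≠ 0) {u : V}
    (h0 : aeval T (r ^ e * s) u = 0) (h1 : aeval T (r ^ (e - 1) * s) u ≠ 0) :
    aeval T (r ^ (e - 1) * s * s) u ≠ 0 := by
  intro h
  obtain ⟨a, b, hab⟩ := hc
  apply h1
  rw [show r ^ (e - 1) * s = a * (r ^ e * s) + b * (r ^ (e - 1) * s * s) by
    obtain ⟨k, rfl⟩ := Nat.exists_eq_succ_of_ne_zero he
    rw [Nat.succ_sub_one, Nat.succ_eq_add_one, pow_succ]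
    linear_combination (-(r ^ k * s)) * hab, map_add, LinearMap.add_apply, amul, amul _ b, h0, h]
  simp

theorem exists_g (S : Sys f T D) {W : Submodule K V} (hW : ND f W) (hT : ∀ x ∈ W, T x ∈ W)
    (P : K[X]) (h : ∃ v ∈ W, aeval T P v ≠ 0) : ∃ v ∈ W, f (aeval T P v) v ≠ 0 := by
  by_contra hcon
  push Not at hcon
  obtain ⟨v, hv, hne⟩ := h
  exact hne (hW _ (amem hT P hv) (polar S P hcon v hv))

theorem gx (S : Sys f T D) (p s : K[X]) (v w : V) :
    f (aeval T p (aeval T s v)) (aeval T s w) = f (aeval T (p * s * s) v) w := by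
  rw [← amul, ← S.adj, ← amul, mul_comm s]

theorem step (S : Sys f T D) {W U : Submodule K V} (hWT : ∀ x ∈ W, T x ∈ W)
    (hWD : ∀ x ∈ W, D x ∈ W) (hW : ND f W) (hU : State f T D U ∅) (hUW : U ≤ W)
    (hUT : ∀ x ∈ U, T x ∈ U) (hUD : ∀ x ∈ U, D x ∈ U) (hne : ∃ x ∈ U, x ≠ 0)
    (IH : ∀ W' : Submodule K V, finrank K W' < finrank K W → (∀ x ∈ W', T x ∈ W') →
      (∀ x ∈ W', D x ∈ W') → ND f W' → State f T D W' (XW T W')) :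
    State f T D W (XW T W) := by
  obtain ⟨U', hU', hsup, hperp, hdis, hnd⟩ := ND_compl S.symm hW (hU.nd S.symm) hUW
  obtain ⟨h1, h2⟩ := S.compl_inv hWT hWD hUT hUD hU'
  have hlt : finrank K U' < finrank K W := by
    have := finrank_sup_disj hdis
    rw [hsup] at this
    have hU0 : 0 < finrank K U := by
      obtain ⟨x, hx, hx0⟩ := hne
      rw [Nat.pos_iff_ne_zero, Ne, Submodule.finrank_eq_zero]
      rintro rfl
      exact hx0 (by simpa using hx)
    omega
  have := hU.add S.symm hperp (Set.empty_disjoint _) (IH U' hlt h1 h2 hnd)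
  rw [hsup] at this
  refine this.mono ?_
  rw [Set.empty_union]
  exact XW_mono (hsup ▸ le_sup_right)

theorem root_of_dvd (S : Sys f T D) {r : K[X]} (hr : Irreducible r) (hm : r.Monic)
    (h : r ∣ X ^ 2 - C 4) : ∃ c : K, c ^ 2 = 4 ∧ r = X - C c := by
  rw [fac4 (c := (2 : K)) (by norm_num)] at h
  rcases hr.prime.dvd_or_dvd h with h | h
  · exact ⟨2, by norm_num, eq_of_monic_of_associated hm (monic_X_sub_C _)
      (hr.associated_of_dvd (irreducible_X_sub_C _) h)⟩
  · rw [show (X + C 2 : K[X]) = X - C (-2) by rw [C_neg, sub_neg_eq_add]] at h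
    exact ⟨-2, by norm_num, eq_of_monic_of_associated hm (monic_X_sub_C _)
      (hr.associated_of_dvd (irreducible_X_sub_C _) h)⟩

theorem main_state (S : Sys f T D) (hm1 : quadraticChar K (-1) = -1) (n : ℕ) :
    ∀ W : Submodule K V, finrank K W = n → (∀ x ∈ W, T x ∈ W) →
      (∀ x ∈ W, D x ∈ W) → ND f W → State f T D W (XW T W) := by
  induction n using Nat.strong_induction_on with
  | _ n ih =>
  intro W hn hWT hWD hW
  have IH : ∀ W' : Submodule K V, finrank K W' < finrank K W → (∀ x ∈ W', T x ∈ W') →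
      (∀ x ∈ W', D x ∈ W') → ND f W' → State f T D W' (XW T W') :=
    fun W' h => ih _ (hn ▸ h) W' rfl
  by_cases hbot : W = ⊥
  · subst hbot; exact State.bot S.symm _
  obtain ⟨r, s, e, hr, hm, he, hrs, hk, hdv, hnk⟩ := exists_min T hbot
  have hne : ∀ {v w : V}, f v w ≠ 0 → v ≠ 0 := by rintro v w h rfl; simp at h
  have hne' : ∀ {p : K[X]} {v w : V}, f (aeval T p v) w ≠ 0 → v ≠ 0 := by
    rintro p v w h rfl; simp at h
  have hsq : ∃ v ∈ W, aeval T (r ^ (e - 1) * s * s) v ≠ 0 := by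
    obtain ⟨v, hv, h⟩ := hnk
    exact ⟨v, hv, sq_ne hrs he (hk v hv) h⟩
  by_cases hc : r ∣ X ^ 2 - C 4
  swap
  · obtain ⟨v, hv, hg⟩ := exists_g S hW hWT _ hsq
    rw [← gx S] at hg
    have hx : aeval T s v ∈ W := amem hWT s hv
    exact step S hWT hWD hW (gen_block S hm1 hr hm he (by rw [← amul]; exact hk v hv) hg
      ((hr.coprime_iff_not_dvd).2 hc)) (Zsup_le hWT hWD hx) (Zsup_T S _) (Zsup_D S _)
      ⟨_, Submodule.mem_sup_left (self_mem_Z _ _), hne' hg⟩ IH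
  obtain ⟨c, hc4, rfl⟩ := root_of_dvd S hr hm hc
  by_cases hD : ∃ v ∈ W, aeval T ((X - C c) ^ (e - 1) * s) (D v) ≠ 0
  · obtain ⟨v, hv, hv1⟩ := hD
    have hv2 := sq_ne hrs he (hk _ (hWD v hv)) hv1
    obtain ⟨w, hw, hg⟩ : ∃ w ∈ W, f (aeval T ((X - C c) ^ (e - 1) * s * s) (D v)) w ≠ 0 := by
      by_contra hcon
      push Not at hcon
      exact hv2 (hW _ (amem hWT _ (hWD v hv)) hcon)
    rw [← gx S, S.acomm s] at hg
    have hxW : aeval T s v ∈ W := amem hWT s hv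
    have hyW : aeval T s w ∈ W := amem hWT s hw
    have hx0 : aeval T ((X - C c) ^ e) (aeval T s v) = 0 := by rw [← amul]; exact hk v hv
    have hy0 : aeval T ((X - C c) ^ e) (aeval T s w) = 0 := by rw [← amul]; exact hk w hw
    generalize aeval T s v = x at *
    generalize aeval T s w = y at *
    obtain ⟨q, hq1, hq2⟩ := adjust S hc4 he hx0 hy0 hg
    have hzW : y + aeval T q (D y) ∈ W := W.add_mem hyW (amem hWT q (hWD y hyW))
    have hz0 : aeval T ((X - C c) ^ e) (y + aeval T q (D y)) = 0 := by
      rw [map_add, hy0, ← amul, mul_comm, amul, S.acomm, hy0]; simp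
    generalize y + aeval T q (D y) = z at *
    have hst := hyp_block S hm1 hc4 he hx0 hz0 hq2 hq1
    have hre : (Z T x ⊔ Z T (D z)) ⊔ (Z T z ⊔ Z T (D x)) =
        (Z T x ⊔ Z T (D x)) ⊔ (Z T z ⊔ Z T (D z)) := by
      ac_rfl
    rw [hre] at hst
    refine step S hWT hWD hW hst (sup_le (Zsup_le hWT hWD hxW) (Zsup_le hWT hWD hzW))
      (map_sup_mem (Zsup_T S x) (Zsup_T S z)) (map_sup_mem (Zsup_D S x) (Zsup_D S z))
      ⟨x, Submodule.mem_sup_left (Submodule.mem_sup_left (self_mem_Z _ _)), ?_⟩ IH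
    rintro rfl
    simp at hq2
  push Not at hD
  have mk : ∀ v ∈ W, f (aeval T ((X - C c) ^ (e - 1) * s * s) v) v ≠ 0 →
      Uv f T D c e (aeval T s v) := by
    intro v hv hg
    rw [← gx S] at hg
    exact ⟨by rw [← amul]; exact hk v hv, by rw [← S.acomm, ← amul]; exact hD v hv, hg⟩
  obtain ⟨v, hv, hg⟩ := exists_g S hW hWT _ hsq
  have ux := mk v hv hg
  have hxW : aeval T s v ∈ W := amem hWT s hv
  generalize aeval T s v = x at *
  have s1 := unip_single S hm1 hc4 he ux
  obtain ⟨W', hW', hsup, hperp, hdis, hnd⟩ :=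
    ND_compl S.symm hW (s1.nd S.symm) (Zsup_le hWT hWD hxW)
  obtain ⟨h1, h2⟩ := S.compl_inv hWT hWD (Zsup_T S x) (Zsup_D S x) hW'
  have hx0 : x ≠ 0 := hne' ux.hg
  have hle : W' ≤ W := hsup ▸ le_sup_right
  by_cases hk' : ∃ w ∈ W', aeval T ((X - C c) ^ (e - 1) * s) w ≠ 0
  · have hsq' : ∃ v ∈ W', aeval T ((X - C c) ^ (e - 1) * s * s) v ≠ 0 := by
      obtain ⟨v, hv, h⟩ := hk'
      exact ⟨v, hv, sq_ne hrs he (hk v (hle hv)) h⟩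
    obtain ⟨w, hw, hgw⟩ := exists_g S hnd h1 _ hsq'
    have uy := mk w (hle hw) hgw
    have hyW : aeval T s w ∈ W' := amem h1 s hw
    generalize aeval T s w = y at *
    have hyle := Zsup_le h1 h2 hyW
    have hp : Perp f (Z T x ⊔ Z T (D x)) (Z T y ⊔ Z T (D y)) :=
      fun a ha b hb => hperp a ha b (hyle hb)
    exact step S hWT hWD hW (unip_pair S hm1 hc4 he ux uy hp ∅)
      (sup_le (Zsup_le hWT hWD hxW) (hyle.trans hle))
      (map_sup_mem (Zsup_T S x) (Zsup_T S y)) (map_sup_mem (Zsup_D S x) (Zsup_D S y))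
      ⟨x, Submodule.mem_sup_left (Submodule.mem_sup_left (self_mem_Z _ _)), hx0⟩ IH
  · push Not at hk'
    have hlt : finrank K W' < finrank K W := by
      have := finrank_sup_disj hdis
      rw [hsup] at this
      have hU0 : 0 < finrank K (Z T x ⊔ Z T (D x) : Submodule K V) := by
        rw [Nat.pos_iff_ne_zero, Ne, Submodule.finrank_eq_zero]
        intro h
        have : x ∈ Z T x ⊔ Z T (D x) := Submodule.mem_sup_left (self_mem_Z _ _)
        rw [h] at this
        exact hx0 (by simpa using this)
      omega
    have hdisj : Disjoint ({(e, c)} : Set (ℕ × K)) (XW T W') := by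
      rw [Set.disjoint_singleton_left]
      intro h
      have h3 : (X - C c) ^ e ∣ (X - C c) ^ (e - 1) * s := h _ hk'
      have h4 : IsCoprime ((X - C c) ^ e) s := hrs.pow_left
      have h5 := h4.dvd_of_dvd_mul_right h3
      rw [pow_dvd_pow_iff hr.ne_zero hr.not_isUnit] at h5
      omega
    have := s1.add S.symm hperp hdisj (IH W' hlt h1 h2 hnd)
    rw [hsup] at this
    refine this.mono (Set.union_subset ?_ (XW_mono hle))
    rw [Set.singleton_subset_iff]
    exact hdv

end fin

section fin
variable [Fintype K] [DecidableEq K] [FiniteDimensional K V]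
variable {f : LinearMap.BilinForm K V} {T D : Module.End K V}

/-- reflection-type map -/
noncomputable def reflE (f : LinearMap.BilinForm K V) (v : V) (c : K) (h : c * f v v = 2) :
    V ≃ₗ[K] V :=
  LinearEquiv.ofInvolutive
    { toFun := fun x => x - (c * f v x) • v
      map_add' := fun x y => by simp only [map_add, mul_add, add_smul]; abel
      map_smul' := fun a x => by
        simp only [map_smul, smul_eq_mul, RingHom.id_apply, smul_sub, smul_smul]
        congr 2; ring } (by
    intro x
    simp only [LinearMap.coe_mk, AddHom.coe_mk, map_sub, map_smul, smul_eq_mul]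
    match_scalars
    · ring
    · linear_combination (c * f v x) * h)

theorem reflE_apply (v : V) (c : K) (h : c * f v v = 2) (x : V) :
    reflE f v c h x = x - (c * f v x) • v := rfl

theorem reflE_sq (v : V) (c : K) (h : c * f v v = 2) : (reflE f v c h)⁻¹ = reflE f v c h := by
  rw [inv_eq_iff_mul_eq_one]
  ext x
  change reflE f v c h (reflE f v c h x) = x
  simp only [reflE_apply, map_sub, map_smul, smul_eq_mul]
  match_scalars
  · ring
  · linear_combination (c * f v x) * h

theorem reflE_mem (hf : f.IsSymm) (v : V) (c : K) (h : c * f v v = 2) :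
    reflE f v c h ∈ orthGroup f := by
  intro x y
  simp only [reflE_apply, map_sub, map_smul, smul_eq_mul, LinearMap.sub_apply, LinearMap.smul_apply]
  rw [hf.eq x v]
  linear_combination (c * f v x * f v y) * h

theorem pair_mem (hf : f.IsSymm) {u w : V} (hu : f u u = 1) (hw : f w w = 1) (huw : f u w = 0) :
    ∃ g ∈ omegaGroup f, ∀ x, g x = x - (2 * f u x) • u - (2 * f w x) • w := by
  have hwu : f w u = 0 := by rw [hf.eq]; exact huw
  let s := reflE f u 2 (by rw [hu, mul_one])
  have ht : 1 * f (u - w) (u - w) = 2 := by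
    simp only [map_sub, LinearMap.sub_apply, hu, hw, huw, hwu]; norm_num
  let t := reflE f (u - w) 1 ht
  refine ⟨s * t * s⁻¹ * t⁻¹, Subgroup.commutator_mem_commutator (reflE_mem hf _ _ _) (reflE_mem hf _ _ _), ?_⟩
  intro x
  rw [reflE_sq, reflE_sq]
  change s (t (s (t x))) = _
  simp only [s, t, reflE_apply, map_sub, map_smul, smul_eq_mul, LinearMap.sub_apply,
    LinearMap.smul_apply, hu, hw, huw, hwu]
  module

theorem exists_aniso (hf : f.IsSymm) (h2 : (2 : K) ≠ 0) {N : Submodule K V} (hN : ND f N)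
    (h : 1 ≤ finrank K N) : ∃ v ∈ N, f v v ≠ 0 := by
  by_contra hcon
  push Not at hcon
  have : N = ⊥ := by
    rw [eq_bot_iff]
    intro v hv
    rw [Submodule.mem_bot]
    refine hN v hv fun w hw => ?_
    have h1 := hcon _ (N.add_mem hv hw)
    rw [map_add, map_add, LinearMap.add_apply, LinearMap.add_apply, hcon v hv, hcon w hw,
      hf.eq w v] at h1
    have : 2 * f v w = 0 := by linear_combination h1
    exact (mul_eq_zero.1 this).resolve_left h2
  rw [this, finrank_bot] at h
  omega

theorem line (hf : f.IsSymm) {v : V} (hv : f v v ≠ 0) :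
    ND f (Submodule.span K {v}) ∧ finrank K (Submodule.span K {v}) = 1 ∧
      dsc f (Submodule.span K {v}) = quadraticChar K (f v v) := by
  have hv0 : v ≠ 0 := by rintro rfl; simp at hv
  refine ⟨?_, finrank_span_singleton hv0, ?_⟩
  · intro x hx h
    obtain ⟨a, rfl⟩ := Submodule.mem_span_singleton.1 hx
    have := h v (Submodule.mem_span_singleton_self v)
    rw [map_smul, LinearMap.smul_apply, smul_eq_mul] at this
    rw [(mul_eq_zero.1 this).resolve_right hv, zero_smul]
  · have hli : LinearIndependent K (fun _ : Unit => v) := by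
      rw [linearIndependent_unique_iff]; exact hv0
    rw [dsc_fam f (Submodule.span K {v}) (fun _ : Unit => v) hli (by simp)]
    simp

theorem exists_one (hf : f.IsSymm) (h2 : (2 : K) ≠ 0) {N : Submodule K V} (hN : ND f N)
    (h : 2 ≤ finrank K N ∨ (finrank K N = 1 ∧ dsc f N = 1)) : ∃ u ∈ N, f u u = 1 := by
  obtain ⟨v, hv, hvv⟩ := exists_aniso hf h2 hN (by omega)
  obtain ⟨l1, l2, l3⟩ := line hf hvv
  have hle : Submodule.span K {v} ≤ N := by rw [Submodule.span_singleton_le_iff_mem]; exact hv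
  rcases h with h | ⟨h, hd⟩
  · obtain ⟨U', hU', hsup, hperp, hdis, hnd⟩ := ND_compl hf hN l1 hle
    have hfr := finrank_sup_disj hdis
    rw [hsup, l2] at hfr
    obtain ⟨w, hw, hww⟩ := exists_aniso hf h2 hnd (by omega)
    obtain ⟨a, b, hab⟩ := quad_ab h2 (d := 1) hvv hww
    have hvw : f v w = 0 := hperp v (Submodule.mem_span_singleton_self v) w hw
    have hwv : f w v = 0 := by rw [hf.eq]; exact hvw
    refine ⟨a • v + b • w, N.add_mem (N.smul_mem _ hv) (N.smul_mem _ ((hU' w).1 hw).1), ?_⟩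
    simp only [map_add, map_smul, LinearMap.add_apply, LinearMap.smul_apply, smul_eq_mul, hvw, hwv]
    linear_combination hab
  · have heq := Submodule.eq_of_le_of_finrank_eq hle (by rw [l2, h])
    rw [← heq, l3, quadraticChar_one_iff_isSquare hvv] at hd
    obtain ⟨a, ha⟩ := hd
    have ha0 : a ≠ 0 := by rintro rfl; simp at ha; exact hvv ha
    refine ⟨a⁻¹ • v, N.smul_mem _ hv, ?_⟩
    simp only [map_smul, LinearMap.smul_apply, smul_eq_mul, ha]
    field_simp

theorem pop (hf : f.IsSymm) (h2 : (2 : K) ≠ 0) {N : Submodule K V} (hN : ND f N)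
    (h : 2 ≤ finrank K N ∨ (finrank K N = 1 ∧ dsc f N = 1)) :
    ∃ u ∈ N, ∃ N' : Submodule K V, f u u = 1 ∧ (∀ x, x ∈ N' ↔ x ∈ N ∧ f u x = 0) ∧ ND f N' ∧
      finrank K N' + 1 = finrank K N ∧ dsc f N' = dsc f N := by
  obtain ⟨u, hu, huu⟩ := exists_one hf h2 hN h
  obtain ⟨l1, l2, l3⟩ := line hf (v := u) (by rw [huu]; exact one_ne_zero)
  have hle : Submodule.span K {u} ≤ N := by rw [Submodule.span_singleton_le_iff_mem]; exact hu
  obtain ⟨N', hN', hsup, hperp, hdis, hnd⟩ := ND_compl hf hN l1 hle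
  have hfr := finrank_sup_disj hdis
  have hds := dsc_sup hf hperp hdis
  rw [hsup, l2] at hfr
  rw [hsup, l3, huu, map_one, one_mul] at hds
  refine ⟨u, hu, N', huu, ?_, hnd, by omega, hds.symm⟩
  intro x
  rw [hN']
  refine and_congr_right fun _ => ⟨fun h => h u (Submodule.mem_span_singleton_self u), ?_⟩
  intro h y hy
  obtain ⟨a, rfl⟩ := Submodule.mem_span_singleton.1 hy
  rw [map_smul, LinearMap.smul_apply, h, smul_zero]

theorem sig (hf : f.IsSymm) (h2 : (2 : K) ≠ 0) (n : ℕ) : ∀ N : Submodule K V,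
    finrank K N = 2 * n → ND f N → dsc f N = 1 →
    ∃ g ∈ omegaGroup f, (∀ x ∈ N, g x = -x) ∧ ∀ x, (∀ y ∈ N, f y x = 0) → g x = x := by
  induction n with
  | zero =>
    intro N hn _ _
    have : N = ⊥ := Submodule.finrank_eq_zero.1 (by simpa using hn)
    subst this
    refine ⟨1, one_mem _, ?_, fun x _ => rfl⟩
    intro x hx
    rw [Submodule.mem_bot] at hx
    simp [hx]
  | succ n ih =>
    intro N hn hN hd
    obtain ⟨u, hu, N1, huu, hN1, nd1, k1, d1⟩ := pop hf h2 hN (.inl (by omega))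
    obtain ⟨w, hw, N2, hww, hN2, nd2, k2, d2⟩ := pop hf h2 nd1 (by
      rcases Nat.eq_zero_or_pos n with h | h
      · right; exact ⟨by omega, by rw [d1, hd]⟩
      · left; omega)
    obtain ⟨g, hg, g1, g2⟩ := ih N2 (by omega) nd2 (by rw [d2, d1, hd])
    have huw : f u w = 0 := ((hN1 w).1 hw).2
    have hwu : f w u = 0 := by rw [hf.eq]; exact huw
    obtain ⟨p, hp, hpx⟩ := pair_mem hf huu hww huw
    have hwN : w ∈ N := ((hN1 w).1 hw).1
    refine ⟨p * g, mul_mem hp hg, ?_, ?_⟩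
    · intro x hx
      have gu : g u = u := g2 u fun y hy => by
        rw [hf.eq]; exact ((hN1 y).1 ((hN2 y).1 hy).1).2
      have gw : g w = w := g2 w fun y hy => by
        rw [hf.eq]; exact ((hN2 y).1 hy).2
      obtain ⟨z, hz⟩ : ∃ z, z = x - (f u x) • u - (f w x) • w := ⟨_, rfl⟩
      have hzN : z ∈ N := by
        rw [hz]; exact N.sub_mem (N.sub_mem hx (N.smul_mem _ hu)) (N.smul_mem _ hwN)
      have uz : f u z = 0 := by
        rw [hz]; simp only [map_sub, map_smul, smul_eq_mul, huu, huw]; ring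
      have wz : f w z = 0 := by
        rw [hz]; simp only [map_sub, map_smul, smul_eq_mul, hww, hwu]; ring
      have hz2 : z ∈ N2 := (hN2 z).2 ⟨(hN1 z).2 ⟨hzN, uz⟩, wz⟩
      have hx' : x = z + (f u x) • u + (f w x) • w := by rw [hz]; abel
      generalize f u x = a at *
      generalize f w x = b at *
      subst hx'
      change p (g _) = _
      rw [map_add g, map_add g, map_smul g, map_smul g, gu, gw, g1 z hz2, hpx]
      simp only [map_add, map_smul, map_neg, smul_eq_mul, huu, huw, hwu, hww, uz, wz]
      module
    · intro x hx
      have : g x = x := g2 x fun y hy => hx y ((hN1 y).1 ((hN2 y).1 hy).1).1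
      change p (g x) = x
      rw [this, hpx, hx u hu, hx w hwN, mul_zero, zero_smul, zero_smul, sub_zero, sub_zero]

theorem num_final {A : Finset (ℕ × K)} (hA : ∀ p ∈ A, 1 ≤ p.1 ∧ p.2 ^ 2 = 4) {J : ℕ}
    (hn : ∑ p ∈ A, (2 * p.1 - 1) + 4 * J = 8 ∨ ∑ p ∈ A, (2 * p.1 - 1) + 4 * J = 9) :
    (J + ∑ p ∈ A, p.1 / 2) % 2 = 0 := by
  have hle : ∀ p ∈ A, p.1 ∈ Finset.range 6 := by
    intro p hp
    have := Finset.single_le_sum (f := fun p : ℕ × K => 2 * p.1 - 1) (fun _ _ => Nat.zero_le _) hp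
    rw [Finset.mem_range]
    omega
  have hcard : ∀ e, (A.filter fun p => p.1 = e).card ≤ 2 := by
    intro e
    have : (A.filter fun p => p.1 = e) ⊆ {(e, 2), (e, -2)} := by
      intro p hp
      rw [Finset.mem_filter] at hp
      have h4 := (hA p hp.1).2
      have : (p.2 - 2) * (p.2 + 2) = 0 := by linear_combination h4
      rw [Finset.mem_insert, Finset.mem_singleton]
      rcases mul_eq_zero.1 this with h | h
      · left; exact Prod.ext hp.2 (sub_eq_zero.1 h)
      · right; exact Prod.ext hp.2 (eq_neg_of_add_eq_zero_left h)
    exact (Finset.card_le_card this).trans Finset.card_le_two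
  have hsum : ∀ h : ℕ → ℕ, ∑ p ∈ A, h p.1 =
      ∑ e ∈ Finset.range 6, (A.filter fun p => p.1 = e).card * h e := by
    intro h
    rw [← Finset.sum_fiberwise_of_maps_to hle]
    refine Finset.sum_congr rfl fun e _ => ?_
    rw [Finset.sum_congr rfl (g := fun _ => h e), Finset.sum_const, smul_eq_mul]
    intro p hp
    rw [(Finset.mem_filter.1 hp).2]
  have h0 : (A.filter fun p => p.1 = 0).card = 0 := by
    rw [Finset.card_eq_zero, Finset.filter_eq_empty_iff]
    intro p hp h
    have := (hA p hp).1
    omega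
  rw [hsum (fun e => 2 * e - 1)] at hn
  rw [hsum (fun e => e / 2)]
  have c1 := hcard 1
  have c2 := hcard 2
  have c3 := hcard 3
  have c4 := hcard 4
  have c5 := hcard 5
  simp only [Finset.sum_range_succ, Finset.sum_range_zero, h0] at hn ⊢
  norm_num at hn ⊢
  omega

theorem ach_89 {W : Submodule K V} {Y : Set (ℕ × K)} (h : State f T D W Y)
    (hn : finrank K W = 8 ∨ finrank K W = 9) : Ach f T D W 1 1 := by
  cases h with
  | full h => exact h 1 1 (.inl rfl) (.inl rfl)
  | fr hn' h =>
    have : finrank K W = 8 := by omega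
    simpa [this] using h 1 (.inl rfl)
  | dst hn' δ hδ h1 h2 => omega
  | tt A hA a J ha hn' h1 h2 =>
    have := num_final (fun p hp => (hA p hp).2) (J := J) (by rwa [hn'] at hn)
    rwa [Even.neg_one_pow (Nat.even_iff.2 this)] at h1

theorem ach_0 {W : Submodule K V} {Y : Set (ℕ × K)} (h : State f T D W Y)
    (hn : finrank K W % 4 = 0) : ∃ b, Ach f T D W 1 b := by
  cases h with
  | full h => exact ⟨1, h 1 1 (.inl rfl) (.inl rfl)⟩
  | fr hn' h =>
    have := h 1 (.inl rfl)
    rw [Even.neg_one_pow (Nat.even_iff.2 (by omega))] at this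
    exact ⟨1, this⟩
  | dst hn' δ hδ h1 h2 => omega
  | tt A hA a J ha hn' h1 h2 => exact ⟨_, h1⟩

theorem sys_of (hf : f.IsSymm) (h2 : (2 : K) ≠ 0) {φ : V ≃ₗ[K] V} (hφ : φ ∈ orthGroup f) :
    Sys f ((φ : Module.End K V) + (φ.symm : Module.End K V))
      ((φ : Module.End K V) - (φ.symm : Module.End K V)) := by
  have a1 : ∀ x y, f (φ x) y = f x (φ.symm y) := fun x y => by
    conv_lhs => rw [← φ.apply_symm_apply y]
    exact hφ _ _
  have a2 : ∀ x y, f (φ.symm x) y = f x (φ y) := fun x y => by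
    rw [hf.eq, ← a1, hf.eq]
  refine ⟨hf, h2, ?_, ?_, ?_, ?_⟩
  · intro x y
    simp only [LinearMap.add_apply, LinearEquiv.coe_coe, map_add, a1, a2]; ring
  · intro x y
    simp only [LinearMap.sub_apply, LinearEquiv.coe_coe, map_sub, a1, a2]; ring
  · intro x
    simp only [LinearMap.sub_apply, LinearMap.add_apply, LinearEquiv.coe_coe, map_sub, map_add,
      LinearEquiv.apply_symm_apply, LinearEquiv.symm_apply_apply]
    abel
  · intro x
    simp only [LinearMap.sub_apply, LinearMap.add_apply, LinearEquiv.coe_coe, map_sub, map_add,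
      LinearEquiv.apply_symm_apply, LinearEquiv.symm_apply_apply]
    module

theorem conclude (hf : f.IsSymm) (h2 : (2 : K) ≠ 0) {φ : V ≃ₗ[K] V} (hφ : φ ∈ omegaGroup f)
    {F N : Submodule K V} (h : Conf f ((φ : Module.End K V) + (φ.symm : Module.End K V))
      ((φ : Module.End K V) - (φ.symm : Module.End K V)) ⊤ F N) (hn : finrank K N % 2 = 0)
    (hd : dsc f N = 1) : IsBireflectionalIn (omegaGroup f) φ := by
  obtain ⟨σ, hσ, s1, s2⟩ := sig hf h2 (finrank K N / 2) N (by omega) h.ndN hd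
  have sF : ∀ x ∈ F, σ x = x := fun x hx => s2 x fun y hy => by
    rw [hf.eq]; exact h.perp x hx y hy
  have half : ∀ a b : V, (2 : K) • a = (2 : K) • b → a = b := fun a b hab => by
    have := congrArg (fun v => (2 : K)⁻¹ • v) hab
    simpa [smul_smul, inv_mul_cancel₀ h2] using this
  have key : ∀ x, σ (φ (σ x)) = φ.symm x := by
    intro x
    have hx : x ∈ F ⊔ N := h.sup ▸ Submodule.mem_top
    obtain ⟨a, ha, b, hb, rfl⟩ := Submodule.mem_sup.1 hx
    have t1 := sF _ (h.TF a ha)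
    have t2 := s1 _ (h.DF a ha)
    have t3 := s1 _ (h.TN b hb)
    have t4 := sF _ (h.DN b hb)
    simp only [LinearMap.sub_apply, LinearMap.add_apply, LinearEquiv.coe_coe, map_sub, map_add]
      at t1 t2 t3 t4
    rw [map_add, sF a ha, s1 b hb, map_add, map_neg, map_add, map_neg, map_add]
    have u1 : σ (φ a) = φ.symm a := half _ _ (by
      have : (2 : K) • σ (φ a) = (σ (φ a) + σ (φ.symm a)) + (σ (φ a) - σ (φ.symm a)) := by module
      rw [this, t1, t2]; module)
    have u2 : -σ (φ b) = φ.symm b := half _ _ (by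
      have : (2 : K) • -σ (φ b) = -(σ (φ b) + σ (φ.symm b)) - (σ (φ b) - σ (φ.symm b)) := by module
      rw [this, t3, t4]; module)
    rw [u1, u2]
  have hss : σ * σ = 1 := by
    ext x
    change σ (σ x) = x
    have hx : x ∈ F ⊔ N := h.sup ▸ Submodule.mem_top
    obtain ⟨a, ha, b, hb, rfl⟩ := Submodule.mem_sup.1 hx
    rw [map_add, sF a ha, s1 b hb, map_add, map_neg, sF a ha, s1 b hb, neg_neg]
  have hinv : σ * φ * σ * φ = 1 := by
    ext x
    change σ (φ (σ (φ x))) = x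
    rw [key, LinearEquiv.symm_apply_apply]
  refine ⟨σ, σ * φ, hσ, mul_mem hσ hφ, by rw [pow_two, hss], ?_, ?_⟩
  · rw [pow_two, ← hinv]; group
  · rw [← mul_assoc, hss, one_mul]

end fin

/-- For `K = GF(q)`, `q ≡ 3 (mod 4)`: if `dim V ≡ 0 (mod 4)` and
`disc V = -1`, or `dim V ∈ {8, 9}`, then `Ω(V)` is bireflectional. -/
theorem stmt5 [Fintype K] {q : ℕ} (hq : Fintype.card K = q) (h3 : q % 4 = 3)
    [FiniteDimensional K V]
    (f : LinearMap.BilinForm K V) (hsymm : f.IsSymm) (hnd : f.Nondegenerate)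
    (h : (Module.finrank K V % 4 = 0 ∧ HasDisc f (-1)) ∨
      (Module.finrank K V = 8 ∨ Module.finrank K V = 9)) :
    ∀ φ ∈ omegaGroup f, IsBireflectionalIn (omegaGroup f) φ := by
  classical
  intro φ hφ
  have hsq : ¬ IsSquare (-1 : K) := by
    rw [FiniteField.isSquare_neg_one_iff, hq]; omega
  have h2 : (2 : K) ≠ 0 := by
    intro h
    apply hsq
    exact ⟨1, by linear_combination -h⟩
  have hm1 : quadraticChar K (-1) = -1 := quadraticChar_neg_one_iff_not_isSquare.2 hsq
  have hφ' : φ ∈ orthGroup f := by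
    have : omegaGroup f ≤ orthGroup f := by
      rw [omegaGroup, Subgroup.commutator_le]
      intro a ha b hb
      exact mul_mem (mul_mem (mul_mem ha hb) (inv_mem ha)) (inv_mem hb)
    exact this hφ
  have S := sys_of hsymm h2 hφ'
  have hndT : ND f (⊤ : Submodule K V) := by
    intro x _ hx
    exact hnd.1 x fun y => hx y Submodule.mem_top
  have st := main_state S hm1 _ ⊤ rfl (fun _ _ => Submodule.mem_top) (fun _ _ => Submodule.mem_top)
    hndT
  have evn : ∀ n : ℕ, (-1 : ℤ) ^ n = 1 → n % 2 = 0 := by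
    intro n hn
    by_contra hc
    rw [Odd.neg_one_pow (Nat.odd_iff.2 (by omega))] at hn
    norm_num at hn
  rcases h with ⟨h4, hdisc⟩ | h89
  · obtain ⟨b, F, N, cf, e1, e2⟩ := ach_0 st (by rw [finrank_top]; exact h4)
    have hN := evn _ e1
    have hdis := (ND_sup hsymm cf.ndF cf.ndN cf.perp).2
    have hfr := finrank_sup_disj hdis
    have hds := dsc_sup hsymm cf.perp hdis
    rw [cf.sup, finrank_top] at hfr
    have htop : dsc f (⊤ : Submodule K V) = -1 := by
      obtain ⟨bb, c, hdet⟩ := hdisc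
      rw [dsc_fam f ⊤ (fun i => bb i) bb.linearIndependent bb.span_eq, hdet, map_mul, hm1,
        quadraticChar_sq_one' c.ne_zero, mul_one]
    rw [cf.sup, htop] at hds
    rcases dsc_pm hsymm cf.ndN with hd | hd
    · exact conclude hsymm h2 hφ cf hN hd
    · exact conclude hsymm h2 hφ (cf.swap hsymm) (by omega) (by rw [hd] at hds; omega)
  · obtain ⟨F, N, cf, e1, e2⟩ := ach_89 st (by rw [finrank_top]; exact h89)
    exact conclude hsymm h2 hφ cf (evn _ e1) e2


end Biref
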